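/- Let γ > 0, 1 < α < 2, p > 1, a > 0, b > 0, and let f be locally integrable on [0,∞). Suppose w ∈ C¹([0,∞)), w ≢ 0, the function t ↦ ₀I_t^{2−α}(w(s) − w'(0)s − w(0)) is in AC²([0,T]) for every T > 0, and for almost every t ≥ 0 one has (₀D_t^α w)(t) + a·w(t) = (₀I_t^γ f)(t) and f(t) ≥ b·|w(t)|^p. If γ ≥ α/2 and α + γ > 2, then liminf_{t→+∞} t^{1−γ}·w(t) > 0. -/

import Mathlib

/-!
The equation is solved by variation of constants: with the Mittag-Leffler kernels
`e_τ(t) = t ^ (τ - 1) E_{α, τ}(-a t ^ α)` and `∗` convolution on `[0, t]`,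
`w = w(0) e_1 + w'(0) e_2 + e_{α + γ} ∗ f` almost everywhere.

Two properties of the kernels decide the growth of `w`. First, `e_τ ≥ 0` for `τ ≥ 3α/2`: by
convolution with a positive kernel it suffices to treat `τ = 3α/2`, and by a Post–Widder type
inversion only the signs of the moments `∫ u ^ m e ^ (-c u) e_τ(u) du` matter. These are positive
multiples of the coefficients of `M⁻¹ / (M ^ 2 + q)` with `M = (1 - X) ^ (α / 2)` and `0 < q < 1`,
which are nonnegative because `1 - M` has nonnegative coefficients. So for `γ ≥ α/2` the forced term
is at least the contribution of any interval `[0, R]` on which `f` has positive mass.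

Second, inverting a Laplace transform along `Re z = 1/t` gives `e_τ(t) = O(t ^ (η - 1))` for every
`η > max(0, τ - α)` once `τ ≥ α/2`. Since `a e_{α + γ}(t) = t ^ (γ - 1) / Γ(γ) - e_γ(t)`, the kernel
`e_{α + γ}` is comparable to `t ^ (γ - 1)`, while `e_1` and `e_2` are `o(t ^ (γ - 1))` because
`2 - α < γ`. Hence `t ^ (1 - γ) w(t)` is almost everywhere bounded below by a positive constant for
large `t`, and by continuity everywhere.
-/

open MeasureTheory Filter

/-- Riemann–Liouville fractional integral of order `σ` based at `0`:
`(₀I_t^σ f)(t) = (1/Γ(σ)) ∫₀ᵗ (t−s)^{σ−1} f(s) ds`. -/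
noncomputable def rlInt (σ : ℝ) (f : ℝ → ℝ) (t : ℝ) : ℝ :=
  (1 / Real.Gamma σ) * ∫ s in (0:ℝ)..t, (t - s) ^ (σ - 1) * f s

/-- The function whose second derivative is the (left) Caputo derivative of order `α ∈ (1,2]`:
for `α < 2` it is `₀I_t^{2−α}(w(s) − w'(0)·s − w(0))`, and for `α = 2` it is `w` itself. -/
noncomputable def capKernel (α : ℝ) (w : ℝ → ℝ) : ℝ → ℝ :=
  if α = 2 then w else rlInt (2 - α) (fun s => w s - deriv w 0 * s - w 0)

/-- Left Caputo fractional derivative of order `α ∈ (1,2]`: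
`(₀D_t^α w)(t) = (d²/dt²)[ ₀I_t^{2−α}(w(s) − w'(0)s − w(0)) ](t)` (second derivative of `w` when `α = 2`). -/
noncomputable def caputoD (α : ℝ) (w : ℝ → ℝ) : ℝ → ℝ :=
  deriv (deriv (capKernel α w))

/-- `g ∈ AC²([0,T])`: `g` is differentiable on `[0,T]`, its second derivative is integrable,
and `g'` is the integral of `g''` (i.e. `g'` is absolutely continuous). -/
def AC2On (g : ℝ → ℝ) (T : ℝ) : Prop :=
  (∀ t ∈ Set.Icc (0:ℝ) T, DifferentiableAt ℝ g t) ∧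
  IntervalIntegrable (deriv (deriv g)) volume 0 T ∧
  ∀ t ∈ Set.Icc (0:ℝ) T, deriv g t = deriv g 0 + ∫ s in (0:ℝ)..t, deriv (deriv g) s

/-! ### Binomial series with negative exponent -/

section BinomialSeries

open PowerSeries

/-- The formal power series `(1 - X) ^ (-x)`, whose `m`-th coefficient is
`x (x + 1) ⋯ (x + m - 1) / m!`. It serves as the discrete counterpart of the Laplace multiplier
`s ↦ s ^ (-x)`. -/
noncomputable def negBinomialSeries (x : ℝ) : ℝ⟦X⟧ := PowerSeries.mk (Ring.multichoose x)

lemma coeff_negBinomialSeries (x : ℝ) (m : ℕ) :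
    coeff m (negBinomialSeries x) = Ring.multichoose x m := coeff_mk _ _

lemma constantCoeff_negBinomialSeries (x : ℝ) : constantCoeff (negBinomialSeries x) = 1 := by
  rw [← coeff_zero_eq_constantCoeff_apply, coeff_negBinomialSeries, Ring.multichoose_zero_right]

lemma negBinomialSeries_eq_rescale (x : ℝ) :
    negBinomialSeries x = rescale (-1) (binomialSeries ℝ (-x)) := by
  ext m
  rw [coeff_negBinomialSeries, coeff_rescale, binomialSeries_coeff, Ring.choose_neg',
    smul_eq_mul, mul_one, Int.negOnePow_def, zpow_natCast, Units.smul_def]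
  simp [← mul_assoc, ← mul_pow]

lemma negBinomialSeries_add (x y : ℝ) :
    negBinomialSeries (x + y) = negBinomialSeries x * negBinomialSeries y := by
  simp only [negBinomialSeries_eq_rescale, neg_add, binomialSeries_add, map_mul]

lemma negBinomialSeries_zero : negBinomialSeries 0 = 1 := by
  simp [negBinomialSeries_eq_rescale]

lemma negBinomialSeries_neg_mul_self (x : ℝ) :
    negBinomialSeries (-x) * negBinomialSeries x = 1 := by
  rw [← negBinomialSeries_add, neg_add_cancel, negBinomialSeries_zero]

lemma factorial_mul_multichoose (x : ℝ) (m : ℕ) :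
    (m.factorial : ℝ) * Ring.multichoose x m = ∏ j ∈ Finset.range m, (x + j) := by
  rw [← nsmul_eq_mul, Ring.factorial_nsmul_multichoose_eq_ascPochhammer,
    Polynomial.ascPochhammer_smeval_eq_eval]
  induction m with
  | zero => simp
  | succ m ih => rw [ascPochhammer_succ_eval, ih, Finset.prod_range_succ]

lemma abs_multichoose_le (x : ℝ) (m : ℕ) : |Ring.multichoose x m| ≤ (|x| + m) ^ m := by
  have hm : (1 : ℝ) ≤ m.factorial := by exact_mod_cast m.factorial_pos
  calc |Ring.multichoose x m|
      ≤ m.factorial * |Ring.multichoose x m| := le_mul_of_one_le_left (abs_nonneg _) hm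
    _ = ∏ j ∈ Finset.range m, |x + j| := by
      rw [← Finset.abs_prod, ← factorial_mul_multichoose, abs_mul, Nat.abs_cast]
    _ ≤ ∏ _j ∈ Finset.range m, (|x| + m) := by
      refine Finset.prod_le_prod (fun _ _ => abs_nonneg _) fun j hj => ?_
      have hj : (j : ℝ) ≤ m := by exact_mod_cast (Finset.mem_range.1 hj).le
      exact (abs_add_le _ _).trans (by rw [Nat.abs_cast]; gcongr)
    _ = (|x| + m) ^ m := by rw [Finset.prod_const, Finset.card_range]

lemma multichoose_neg_succ_nonpos {x : ℝ} (hx0 : 0 ≤ x) (hx1 : x ≤ 1) (m : ℕ) :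
    Ring.multichoose (-x) (m + 1) ≤ 0 := by
  have hprod := factorial_mul_multichoose (-x) (m + 1)
  rw [Finset.prod_range_succ'] at hprod
  have htail : 0 ≤ ∏ j ∈ Finset.range m, (-x + ((j + 1 : ℕ) : ℝ)) :=
    Finset.prod_nonneg fun j _ => by push_cast; linarith [(Nat.cast_nonneg j : (0 : ℝ) ≤ j)]
  refine nonpos_of_mul_nonpos_right (hprod.trans_le ?_) (Nat.cast_pos.2 (m + 1).factorial_pos)
  exact mul_nonpos_of_nonneg_of_nonpos htail (by simpa using hx0)

lemma coeff_one_sub_negBinomialSeries_neg_nonneg {x : ℝ} (hx0 : 0 ≤ x) (hx1 : x ≤ 1) (m : ℕ) :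
    0 ≤ coeff m (1 - negBinomialSeries (-x)) := by
  cases m with
  | zero => simp [constantCoeff_negBinomialSeries]
  | succ m =>
    simpa [coeff_negBinomialSeries, coeff_one] using multichoose_neg_succ_nonpos hx0 hx1 m

lemma summable_pow_mul_multichoose {c : ℝ} (hc : |c| < 1) (u v : ℝ) (m : ℕ) :
    Summable fun n : ℕ => c ^ n * Ring.multichoose (u * n + v) m := by
  have hlin : (fun n : ℕ => |u * n + v| + m) =O[atTop] fun n : ℕ => (n : ℝ) := by
    refine Asymptotics.IsBigO.of_bound (|u| + |v| + m) ?_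
    filter_upwards [eventually_ge_atTop 1] with n hn
    have hn : (1 : ℝ) ≤ n := by exact_mod_cast hn
    rw [Real.norm_of_nonneg (by positivity), Real.norm_of_nonneg (by positivity)]
    have huv := abs_add_le (u * n) v
    rw [abs_mul, Nat.abs_cast] at huv
    nlinarith [abs_nonneg v, (Nat.cast_nonneg m : (0 : ℝ) ≤ m)]
  have hpoly : (fun n : ℕ => Ring.multichoose (u * n + v) m) =O[atTop]
      fun n : ℕ => ((n ^ m : ℕ) : ℝ) := by
    simp only [Nat.cast_pow]
    refine Asymptotics.IsBigO.trans (g := fun n : ℕ => (|u * n + v| + m) ^ m) ?_ (hlin.pow m)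
    exact Asymptotics.IsBigO.of_norm_le fun n => abs_multichoose_le (u * n + v) m
  exact (summable_norm_mul_geometric_of_norm_lt_one' hc hpoly).of_norm.congr fun _ => mul_comm _ _

end BinomialSeries

section CoefficientDomination

open PowerSeries

/-- Both series are determined by a recursion `w_m = [m = 0] + ∑ J_k w_{m-k}`; the factor `c` can
only make `u` smaller. -/
lemma norm_coeff_le_coeff_of_recursion {A : Type*} [NormedField A] [NormedAlgebra ℝ A]
    {J Q : ℝ⟦X⟧} {u : A⟦X⟧} {c : A} (hc : 1 ≤ ‖c‖) (hJ0 : constantCoeff J = 0)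
    (hJ : ∀ m, 0 ≤ coeff m J) (hu : C c * u = 1 + J.map (algebraMap ℝ A) * u)
    (hQ : Q = 1 + J * Q) (m : ℕ) : ‖coeff m u‖ ≤ coeff m Q := by
  induction m using Nat.strong_induction_on with
  | _ m ih =>
    have hu_m := congrArg (coeff m) hu
    rw [coeff_C_mul, map_add, coeff_mul] at hu_m
    have hterm : ∀ x ∈ Finset.HasAntidiagonal.antidiagonal m,
        ‖coeff x.1 (J.map (algebraMap ℝ A)) * coeff x.2 u‖ ≤ coeff x.1 J * coeff x.2 Q := by
      intro x hx
      rw [norm_mul, coeff_map, norm_algebraMap', Real.norm_of_nonneg (hJ _)]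
      rcases Nat.eq_zero_or_pos x.1 with h0 | hpos
      · simp [h0, hJ0]
      · have hlt : x.2 < m := by have := Finset.HasAntidiagonal.mem_antidiagonal.1 hx; omega
        exact mul_le_mul_of_nonneg_left (ih _ hlt) (hJ _)
    calc ‖coeff m u‖ ≤ ‖c‖ * ‖coeff m u‖ := le_mul_of_one_le_left (norm_nonneg _) hc
      _ = ‖coeff m (1 : A⟦X⟧) + ∑ x ∈ Finset.HasAntidiagonal.antidiagonal m,
            coeff x.1 (J.map (algebraMap ℝ A)) * coeff x.2 u‖ := by rw [← norm_mul, hu_m]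
      _ ≤ coeff m (1 : ℝ⟦X⟧) + ∑ x ∈ Finset.HasAntidiagonal.antidiagonal m,
            coeff x.1 J * coeff x.2 Q := by
        refine (norm_add_le _ _).trans
          (add_le_add ?_ ((norm_sum_le _ _).trans (Finset.sum_le_sum hterm)))
        rw [coeff_one, coeff_one]
        split_ifs <;> simp
      _ = coeff m Q := by rw [← coeff_mul, ← map_add, ← hQ]

/-- `M / (M ^ 2 + ε ^ 2)` is the real part of `u = 1 / (M - i ε)`, and `(1 - i ε) u = 1 + J u` for
`J = 1 - M`. -/
lemma coeff_mul_le_coeff_of_sq_add_mul_eq_one {M Q R : ℝ⟦X⟧} {ε : ℝ}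
    (hM0 : constantCoeff M = 1) (hM : ∀ m, 0 ≤ coeff m (1 - M))
    (hQ : M * Q = 1) (hR : (M ^ 2 + C (ε ^ 2)) * R = 1) (m : ℕ) :
    coeff m (M * R) ≤ coeff m Q := by
  set φ := PowerSeries.map (algebraMap ℝ ℂ)
  set z : ℂ⟦X⟧ := C (ε * Complex.I)
  have hz : z ^ 2 = -φ (C (ε ^ 2)) := by
    rw [PowerSeries.map_C, ← map_pow, ← map_neg, mul_pow, Complex.I_sq]
    simp
  have hφR : (φ M ^ 2 - z ^ 2) * φ R = 1 := by
    rw [hz, sub_neg_eq_add, ← map_pow, ← map_add, ← map_mul, hR, map_one]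
  have hrec : C (1 - ε * Complex.I) * ((φ M + z) * φ R)
      = 1 + φ (1 - M) * ((φ M + z) * φ R) := by
    rw [map_sub, map_one, map_sub, map_one]
    linear_combination hφR
  have hnorm : 1 ≤ ‖1 - ε * Complex.I‖ := by
    simpa using Complex.abs_re_le_norm (1 - ε * Complex.I)
  have hbound := norm_coeff_le_coeff_of_recursion hnorm (by simp [hM0]) hM hrec
    (Q := Q) (by linear_combination hQ) m
  refine le_trans (le_of_eq ?_) ((Complex.re_le_norm _).trans hbound)
  rw [add_mul, ← map_mul, map_add, coeff_map, coeff_C_mul, coeff_map]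
  simp

open scoped PowerSeries.WithPiTopology in
/-- The sum is the `m`-th coefficient of `M⁻¹ / (M ^ 2 + c)` with `M = (1 - X) ^ β`, and `c` times
this series equals `M⁻¹ - M / (M ^ 2 + c)`. -/
lemma tsum_neg_pow_mul_multichoose_nonneg {β c : ℝ} (hβ0 : 0 ≤ β) (hβ1 : β ≤ 1) (hc0 : 0 < c)
    (hc1 : c < 1) (m : ℕ) :
    0 ≤ ∑' n : ℕ, (-c) ^ n * Ring.multichoose (2 * β * n + 3 * β) m := by
  set S : ℝ⟦X⟧ := PowerSeries.mk fun m =>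
    ∑' n : ℕ, (-c) ^ n * Ring.multichoose (2 * β * n + 3 * β) m with hS
  set M := negBinomialSeries (-β)
  set Q := negBinomialSeries β
  have hMQ : M * Q = 1 := negBinomialSeries_neg_mul_self β
  have hsum : HasSum (fun n : ℕ => C ((-c) ^ n) * negBinomialSeries (2 * β * n + 3 * β)) S := by
    rw [PowerSeries.WithPiTopology.hasSum_iff_hasSum_coeff]
    intro d
    simp only [coeff_C_mul, coeff_negBinomialSeries, hS, coeff_mk]
    exact (summable_pow_mul_multichoose (by rwa [abs_neg, abs_of_pos hc0]) _ _ d).hasSum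
  have hshift : HasSum (fun n : ℕ => C ((-c) ^ (n + 1)) *
      negBinomialSeries (2 * β * ((n + 1 : ℕ) : ℝ) + 3 * β)) (C (-c) * Q ^ 2 * S) := by
    convert! hsum.mul_left (C (-c) * Q ^ 2) using 2 with n
    rw [show 2 * β * ((n + 1 : ℕ) : ℝ) + 3 * β = β + (β + (2 * β * n + 3 * β)) by push_cast; ring,
      negBinomialSeries_add, negBinomialSeries_add, pow_succ, map_mul]
    ring
  have hgeom : S - Q ^ 3 = C (-c) * Q ^ 2 * S := by
    have hQ3 : negBinomialSeries (3 * β) = Q ^ 3 := by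
      rw [show 3 * β = β + (β + β) by ring, negBinomialSeries_add, negBinomialSeries_add]
      ring
    refine HasSum.unique ?_ hshift
    simpa [hQ3] using (hasSum_nat_add_iff' 1).2 hsum
  rw [map_neg] at hgeom
  have hR : (M ^ 2 + C (√c ^ 2)) * (M * S) = 1 := by
    rw [Real.sq_sqrt hc0.le]
    linear_combination M ^ 3 * hgeom
      + ((M * Q) ^ 2 + M * Q + 1 - C c * M * S * (M * Q + 1)) * hMQ
  have hdom := coeff_mul_le_coeff_of_sq_add_mul_eq_one (constantCoeff_negBinomialSeries (-β))
    (coeff_one_sub_negBinomialSeries_neg_nonneg hβ0 hβ1) hMQ hR m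
  have hdiff : C c * S = Q - M * (M * S) := by
    rw [Real.sq_sqrt hc0.le] at hR
    linear_combination Q * hR - (M ^ 2 + C c) * S * hMQ
  have hcoeff := congrArg (coeff m) hdiff
  rw [coeff_C_mul, map_sub, hS, coeff_mk, ← hS] at hcoeff
  exact nonneg_of_mul_nonneg_right (hcoeff.symm ▸ sub_nonneg.2 hdom) hc0

end CoefficientDomination

/-! ### Riemann–Liouville and Mittag-Leffler kernels -/

/-- The Riemann–Liouville kernel `t ^ (τ - 1) / Γ(τ)`, whose convolution with `f` is the fractional
integral `rlInt τ f`. -/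
noncomputable def rlKernel (τ t : ℝ) : ℝ := t ^ (τ - 1) / Real.Gamma τ

/-- The two-parameter Mittag-Leffler function `E_{α,τ}(x)`. -/
noncomputable def mittagLeffler (α τ x : ℝ) : ℝ := ∑' n : ℕ, x ^ n / Real.Gamma (α * n + τ)

/-- The Mittag-Leffler kernel `e_τ(t) = t ^ (τ - 1) E_{α,τ}(-a t ^ α)`, whose Laplace transform is
`z ^ (α - τ) / (z ^ α + a)`. These kernels represent the solutions of `D ^ α w + a w = g`. -/
noncomputable def mlKernel (α a τ t : ℝ) : ℝ := t ^ (τ - 1) * mittagLeffler α τ (-a * t ^ α)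

/-- The convolution `∫₀ᵗ f (t - s) g s ds` of functions on the half-line. -/
noncomputable def causalConv (f g : ℝ → ℝ) (t : ℝ) : ℝ := ∫ s in (0 : ℝ)..t, f (t - s) * g s

section MittagLeffler

variable {α a τ t : ℝ}

lemma rpow_mul_exp_neg_le_Gamma {R x : ℝ} (hR : 0 ≤ R) (hx : 1 ≤ x) :
    R ^ (x - 1) * Real.exp (-R) ≤ Real.Gamma x := by
  have hint := Real.GammaIntegral_convergent (zero_lt_one.trans_le hx)
  calc R ^ (x - 1) * Real.exp (-R) = ∫ t in Set.Ioi R, Real.exp (-t) * R ^ (x - 1) := by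
        rw [integral_mul_const, integral_exp_neg_Ioi, mul_comm]
    _ ≤ ∫ t in Set.Ioi R, Real.exp (-t) * t ^ (x - 1) := by
      refine setIntegral_mono_on ((integrableOn_exp_neg_Ioi R).mul_const _)
        (hint.mono_set (Set.Ioi_subset_Ioi hR)) measurableSet_Ioi fun t ht => ?_
      have hRt : R ^ (x - 1) ≤ t ^ (x - 1) :=
        Real.rpow_le_rpow hR (le_of_lt ht) (sub_nonneg.2 hx)
      gcongr
    _ ≤ ∫ t in Set.Ioi (0 : ℝ), Real.exp (-t) * t ^ (x - 1) := by
      refine setIntegral_mono_set hint ?_ (Set.Ioi_subset_Ioi hR).eventuallyLE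
      filter_upwards [ae_restrict_mem measurableSet_Ioi] with t ht
      exact mul_nonneg (Real.exp_pos _).le (Real.rpow_nonneg (le_of_lt ht) _)
    _ = Real.Gamma x := (Real.Gamma_eq_integral (zero_lt_one.trans_le hx)).symm

lemma summable_mittagLeffler (hα : 0 < α) (τ x : ℝ) :
    Summable fun n : ℕ => x ^ n / Real.Gamma (α * n + τ) := by
  set R := (2 * |x| + 1) ^ α⁻¹
  have hR0 : 0 < R := by positivity
  have hRα : R ^ α = 2 * |x| + 1 := Real.rpow_inv_rpow (by positivity) hα.ne'
  refine Summable.of_norm_bounded_eventually_nat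
    (summable_geometric_two.mul_left (Real.exp R * R ^ (1 - τ))) ?_
  have hlarge : ∀ᶠ n : ℕ in atTop, 1 ≤ α * n + τ :=
    (tendsto_atTop_add_const_right _ τ
      (tendsto_natCast_atTop_atTop.const_mul_atTop hα)).eventually_ge_atTop 1
  filter_upwards [hlarge] with n hn
  have hΓ : R ^ (τ - 1) * (2 * |x| + 1) ^ n * Real.exp (-R) ≤ Real.Gamma (α * n + τ) := by
    refine le_of_eq_of_le ?_ (rpow_mul_exp_neg_le_Gamma hR0.le hn)
    rw [← hRα, ← Real.rpow_natCast, ← Real.rpow_mul hR0.le, ← Real.rpow_add hR0]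
    ring_nf
  rw [norm_div, norm_pow, Real.norm_eq_abs, Real.norm_of_nonneg (le_trans (by positivity) hΓ)]
  calc |x| ^ n / Real.Gamma (α * n + τ)
      ≤ |x| ^ n / (R ^ (τ - 1) * (2 * |x| + 1) ^ n * Real.exp (-R)) := by gcongr
    _ = Real.exp R * R ^ (1 - τ) * (|x| / (2 * |x| + 1)) ^ n := by
      rw [Real.exp_neg, show 1 - τ = -(τ - 1) by ring, Real.rpow_neg hR0.le, div_pow]
      field_simp
    _ ≤ Real.exp R * R ^ (1 - τ) * (1 / 2) ^ n := by
      have hhalf : |x| / (2 * |x| + 1) ≤ 1 / 2 := by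
        rw [div_le_div_iff₀ (by positivity) two_pos]
        linarith
      gcongr

lemma continuous_mittagLeffler (hα : 0 < α) (τ : ℝ) : Continuous (mittagLeffler α τ) := by
  rw [continuous_iff_continuousAt]
  intro x
  have hball : ContinuousOn (mittagLeffler α τ) (Metric.ball 0 (|x| + 1)) := by
    refine continuousOn_tsum (fun n => by fun_prop)
      (summable_mittagLeffler hα τ (|x| + 1)).norm fun n y hy => ?_
    have hyx : ‖y‖ ≤ ‖|x| + 1‖ := by
      rw [Real.norm_of_nonneg (by positivity : 0 ≤ |x| + 1)]
      exact (mem_ball_zero_iff.1 hy).le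
    rw [norm_div, norm_div, norm_pow, norm_pow]
    gcongr
  exact hball.continuousAt (Metric.isOpen_ball.mem_nhds (by simp))

lemma rlKernel_nonneg (hτ : 0 < τ) (ht : 0 ≤ t) : 0 ≤ rlKernel τ t :=
  div_nonneg (Real.rpow_nonneg ht _) (Real.Gamma_pos_of_pos hτ).le

lemma rlKernel_pos (hτ : 0 < τ) (ht : 0 < t) : 0 < rlKernel τ t :=
  div_pos (Real.rpow_pos_of_pos ht _) (Real.Gamma_pos_of_pos hτ)

lemma hasSum_mlKernel (hα : 0 < α) (a τ : ℝ) (ht : 0 < t) :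
    HasSum (fun n : ℕ => (-a) ^ n * rlKernel (α * n + τ) t) (mlKernel α a τ t) := by
  convert! (summable_mittagLeffler hα τ (-a * t ^ α)).hasSum.mul_left (t ^ (τ - 1)) using 1
  funext n
  have hpow : t ^ (α * n + τ - 1) = t ^ (τ - 1) * (t ^ α) ^ n := by
    rw [← Real.rpow_natCast (t ^ α) n, ← Real.rpow_mul ht.le, ← Real.rpow_add ht]
    ring_nf
  rw [rlKernel, hpow, mul_pow]
  ring

lemma mlKernel_eq_rlKernel_sub (hα : 0 < α) (a τ : ℝ) (ht : 0 < t) :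
    mlKernel α a τ t = rlKernel τ t - a * mlKernel α a (τ + α) t := by
  have htail := (hasSum_nat_add_iff' 1).2 (hasSum_mlKernel hα a τ ht)
  have hscaled := (hasSum_mlKernel hα a (τ + α) ht).mul_left (-a)
  have hterm : (fun n : ℕ => -a * ((-a) ^ n * rlKernel (α * n + (τ + α)) t))
      = fun n : ℕ => (-a) ^ (n + 1) * rlKernel (α * ((n + 1 : ℕ) : ℝ) + τ) t := by
    funext n
    rw [show α * ((n + 1 : ℕ) : ℝ) + τ = α * n + (τ + α) by push_cast; ring]
    ring
  have hunique := htail.unique (hterm ▸ hscaled)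
  simp only [Finset.sum_range_one, pow_zero, one_mul, Nat.cast_zero, mul_zero, zero_add] at hunique
  linarith

lemma intervalIntegrable_rlKernel (hτ : 0 < τ) (s t : ℝ) :
    IntervalIntegrable (rlKernel τ) volume s t :=
  (intervalIntegral.intervalIntegrable_rpow' (by linarith)).div_const _

lemma intervalIntegrable_mlKernel (hα : 0 < α) (a : ℝ) (hτ : 0 < τ) (s t : ℝ) :
    IntervalIntegrable (mlKernel α a τ) volume s t := by
  refine IntervalIntegrable.mul_continuousOn
    (intervalIntegral.intervalIntegrable_rpow' (by linarith)) (Continuous.continuousOn ?_)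
  exact (continuous_mittagLeffler hα τ).comp
    (continuous_const.mul (Real.continuous_rpow_const hα.le))

lemma continuousOn_mlKernel (hα : 0 < α) (a τ : ℝ) :
    ContinuousOn (mlKernel α a τ) (Set.Ioi 0) := by
  refine ContinuousOn.mul (fun x hx => ?_) (Continuous.continuousOn ?_)
  · exact (Real.continuousAt_rpow_const _ _ (Or.inl (ne_of_gt hx))).continuousWithinAt
  · exact (continuous_mittagLeffler hα τ).comp
      (continuous_const.mul (Real.continuous_rpow_const hα.le))

lemma rlInt_eq_causalConv (σ : ℝ) (f : ℝ → ℝ) (t : ℝ) :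
    rlInt σ f t = causalConv (rlKernel σ) f t := by
  rw [rlInt, causalConv, ← intervalIntegral.integral_const_mul]
  simp only [rlKernel]
  congr 1 with s
  ring

lemma causalConv_rlKernel {σ : ℝ} (hσ : 0 < σ) (hτ : 0 < τ) (ht : 0 < t) :
    causalConv (rlKernel σ) (rlKernel τ) t = rlKernel (σ + τ) t := by
  have hbeta : ∫ u in (0 : ℝ)..t, u ^ (τ - 1) * (t - u) ^ (σ - 1)
      = t ^ (τ + σ - 1) * ProbabilityTheory.beta τ σ := by
    have hscaled := Complex.betaIntegral_scaled τ σ ht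
    have hre : ∀ u ∈ Set.uIcc 0 t, (u : ℂ) ^ ((τ : ℂ) - 1) * ((t : ℂ) - u) ^ ((σ : ℂ) - 1)
        = ((u ^ (τ - 1) * (t - u) ^ (σ - 1) : ℝ) : ℂ) := fun u hu => by
      rw [Set.uIcc_of_le ht.le] at hu
      push_cast [Complex.ofReal_cpow hu.1, Complex.ofReal_cpow (sub_nonneg.2 hu.2)]
      rfl
    rw [intervalIntegral.integral_congr hre, intervalIntegral.integral_ofReal] at hscaled
    rw [ProbabilityTheory.beta_eq_betaIntegralReal τ σ hτ hσ, ← Complex.re_ofReal_mul,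
      Complex.ofReal_cpow ht.le]
    push_cast
    rw [← hscaled, Complex.ofReal_re]
  have hΓτ := (Real.Gamma_pos_of_pos hτ).ne'
  have hΓσ := (Real.Gamma_pos_of_pos hσ).ne'
  calc causalConv (rlKernel σ) (rlKernel τ) t
      = (Real.Gamma τ * Real.Gamma σ)⁻¹ * ∫ u in (0 : ℝ)..t, u ^ (τ - 1) * (t - u) ^ (σ - 1) := by
        rw [causalConv, ← intervalIntegral.integral_const_mul]
        simp only [rlKernel]
        congr 1 with u
        field_simp
    _ = rlKernel (σ + τ) t := by
        rw [hbeta, ProbabilityTheory.beta, rlKernel, add_comm σ τ]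
        field_simp

lemma intervalIntegrable_rlKernel_mul_rlKernel {σ : ℝ} (hσ : 0 < σ) (hτ : 0 < τ) (ht : 0 < t) :
    IntervalIntegrable (fun u => rlKernel σ (t - u) * rlKernel τ u) volume 0 t :=
  intervalIntegral.intervalIntegrable_of_integral_ne_zero <| by
    simpa only [causalConv_rlKernel hσ hτ ht, causalConv] using
      ((causalConv_rlKernel hσ hτ ht).trans_gt (rlKernel_pos (add_pos hσ hτ) ht)).ne'

lemma causalConv_rlKernel_mlKernel {σ : ℝ} (hα : 0 < α) (a : ℝ) (hσ : 0 < σ) (hτ : 0 < τ)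
    (ht : 0 < t) : causalConv (rlKernel σ) (mlKernel α a τ) t = mlKernel α a (σ + τ) t := by
  have hτn : ∀ n : ℕ, 0 < α * n + τ := fun n => by positivity
  set F : ℕ → ℝ → ℝ := fun n u => (-a) ^ n * (rlKernel σ (t - u) * rlKernel (α * n + τ) u)
  have hint : ∀ n, Integrable (F n) (volume.restrict (Set.Ioc 0 t)) := fun n =>
    ((intervalIntegrable_iff_integrableOn_Ioc_of_le ht.le).1
      (intervalIntegrable_rlKernel_mul_rlKernel hσ (hτn n) ht)).const_mul _
  have hbeta : ∀ n : ℕ, ∫ u in Set.Ioc 0 t, rlKernel σ (t - u) * rlKernel (α * n + τ) u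
      = rlKernel (α * n + (σ + τ)) t := fun n => by
    rw [← intervalIntegral.integral_of_le ht.le, ← causalConv, causalConv_rlKernel hσ (hτn n) ht]
    ring_nf
  have hnorm : ∀ n : ℕ, ∫ u in Set.Ioc 0 t, ‖F n u‖
      = (- -|a|) ^ n * rlKernel (α * n + (σ + τ)) t := fun n => by
    rw [← hbeta, ← integral_const_mul]
    refine setIntegral_congr_fun measurableSet_Ioc fun u hu => ?_
    have hpos := mul_nonneg (rlKernel_nonneg hσ (sub_nonneg.2 hu.2))
      (rlKernel_nonneg (hτn n) hu.1.le)
    simp only [F, norm_mul _ (_ * _), norm_pow, norm_neg, Real.norm_eq_abs, abs_of_nonneg hpos,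
      neg_neg]
  have hsum := hasSum_integral_of_summable_integral_norm hint (by
    simp_rw [hnorm]
    exact (hasSum_mlKernel hα _ _ ht).summable)
  have hconv : causalConv (rlKernel σ) (mlKernel α a τ) t
      = ∫ u in Set.Ioc 0 t, ∑' n : ℕ, F n u := by
    rw [causalConv, intervalIntegral.integral_of_le ht.le]
    refine setIntegral_congr_fun measurableSet_Ioc fun u hu => ?_
    simpa only [F, mul_left_comm] using
      ((hasSum_mlKernel hα a τ hu.1).mul_left (rlKernel σ (t - u))).tsum_eq.symm
  rw [hconv]
  refine hsum.unique ?_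
  simp_rw [F, integral_const_mul, hbeta]
  exact hasSum_mlKernel hα a _ ht

end MittagLeffler

/-! ### Positivity of the Mittag-Leffler kernels -/

lemma integrable_of_hasSum_of_summable_integral_norm {X E : Type*} [MeasurableSpace X]
    {μ : Measure X} [NormedAddCommGroup E] {F : ℕ → X → E} {G : X → E}
    (hF : ∀ n, Integrable (F n) μ) (hsum : Summable fun n => ∫ x, ‖F n x‖ ∂μ)
    (hG : ∀ᵐ x ∂μ, HasSum (fun n => F n x) (G x)) : Integrable G μ := by
  refine ⟨aestronglyMeasurable_of_tendsto_ae atTop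
    (f := fun (N : ℕ) x => ∑ n ∈ Finset.range N, F n x)
    (fun N => Finset.aestronglyMeasurable_fun_sum _ fun n _ => (hF n).aestronglyMeasurable)
    (hG.mono fun x hx => hx.tendsto_sum_nat), ?_⟩
  calc ∫⁻ x, ‖G x‖ₑ ∂μ ≤ ∫⁻ x, ∑' n, ‖F n x‖ₑ ∂μ :=
        lintegral_mono_ae (hG.mono fun x hx => hx.tsum_eq ▸ enorm_tsum_le_tsum_enorm)
    _ = ∑' n, ENNReal.ofReal (∫ x, ‖F n x‖ ∂μ) := by
      rw [lintegral_tsum fun n => (hF n).aestronglyMeasurable.enorm]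
      simp only [ofReal_integral_norm_eq_lintegral_enorm (hF _)]
    _ < ⊤ := hsum.tsum_ofReal_lt_top

section PeakFunction

lemma pow_mul_le_add_indicator {X : Type*} {V : Set X} {φ g : X → ℝ} {u : X} {q r : ℝ}
    (hq : 0 ≤ q) (hr : 0 ≤ r) (hφ : 0 ≤ φ u) (hφq : 0 ≤ g u → φ u ≤ q)
    (hV : V ⊆ {u | g u < 0} ∩ {u | r < φ u}) (n : ℕ) :
    φ u ^ n * g u ≤ q ^ n * |g u| + r ^ n * V.indicator g u := by
  by_cases huV : u ∈ V
  · obtain ⟨hgu : g u < 0, hru : r < φ u⟩ := hV huV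
    have hpow : r ^ n ≤ φ u ^ n := pow_le_pow_left₀ hr hru.le n
    rw [Set.indicator_of_mem huV]
    nlinarith [mul_nonneg (pow_nonneg hq n) (abs_nonneg (g u))]
  rw [Set.indicator_of_notMem huV, mul_zero, add_zero]
  rcases lt_or_ge (g u) 0 with hgu | hgu
  · exact (mul_nonpos_of_nonneg_of_nonpos (pow_nonneg hφ n) hgu.le).trans (by positivity)
  · rw [abs_of_nonneg hgu]
    exact mul_le_mul_of_nonneg_right (pow_le_pow_left₀ hφ (hφq hgu) n) hgu

lemma setIntegral_neg_of_forall_neg {X : Type*} [MeasurableSpace X] {μ : Measure X} {g : X → ℝ}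
    {s : Set X} (hs : MeasurableSet s) (hμ : 0 < μ s) (hg : IntegrableOn g s μ)
    (h : ∀ u ∈ s, g u < 0) : ∫ u in s, g u ∂μ < 0 := by
  have hpos : 0 < ∫ u in s, (-g) u ∂μ := by
    rw [setIntegral_pos_iff_support_of_nonneg_ae _ hg.neg]
    · have hsupp : s ⊆ Function.support (-g) := fun u hu => (neg_pos.2 (h u hu)).ne'
      rwa [Set.inter_eq_right.2 hsupp]
    · filter_upwards [ae_restrict_mem hs] with u hu
      exact (neg_pos.2 (h u hu)).le
  rwa [integral_neg', neg_pos] at hpos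

lemma nonneg_of_forall_integral_pow_mul_nonneg {X : Type*} [TopologicalSpace X]
    [MeasurableSpace X] [OpensMeasurableSpace X] {μ : Measure X} {φ g : X → ℝ} {x : X}
    (hμ : ∀ V ∈ nhds x, 0 < μ V) (hφm : AEStronglyMeasurable φ μ) (hφc : ContinuousAt φ x)
    (hφx : φ x = 1) (hφ : ∀ᵐ u ∂μ, φ u ∈ Set.Icc 0 1)
    (hpeak : ∀ U ∈ nhds x, ∃ q < 1, ∀ᵐ u ∂μ, u ∉ U → φ u ≤ q)
    (hg : Integrable g μ) (hgc : ContinuousAt g x) (h : ∀ n : ℕ, 0 ≤ ∫ u, φ u ^ n * g u ∂μ) :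
    0 ≤ g x := by
  by_contra! hneg
  have hU : {u | g u < 0} ∈ nhds x := hgc.eventually_lt continuousAt_const hneg
  obtain ⟨q₀, hq₀, hpeak⟩ := hpeak _ hU
  obtain ⟨q, hq, hq1⟩ : ∃ q, max q₀ 0 < q ∧ q < 1 := exists_between (max_lt hq₀ one_pos)
  obtain ⟨r, hqr, hr1⟩ := exists_between hq1
  have hq0 : 0 < q := (le_max_right _ _).trans_lt hq
  have hr0 : 0 < r := hq0.trans hqr
  have hφr : {u | r < φ u} ∈ nhds x := continuousAt_const.eventually_lt hφc (hφx ▸ hr1)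
  obtain ⟨V, hVsub, hVo, hxV⟩ := mem_nhds_iff.1 (Filter.inter_mem hU hφr)
  have hVneg : ∫ u in V, g u ∂μ < 0 :=
    setIntegral_neg_of_forall_neg hVo.measurableSet (hμ V (hVo.mem_nhds hxV)) hg.integrableOn
      fun u hu => (hVsub hu).1
  have hint : ∀ n : ℕ, -(∫ u in V, g u ∂μ) ≤ (q / r) ^ n * ∫ u, |g u| ∂μ := by
    intro n
    have hφn : ∀ᵐ u ∂μ, ‖φ u ^ n‖ ≤ 1 := hφ.mono fun u hu => by
      rw [Real.norm_of_nonneg (pow_nonneg hu.1 n)]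
      exact pow_le_one₀ hu.1 hu.2
    have habs : Integrable (fun u => q ^ n * |g u|) μ := hg.abs.const_mul _
    have hind : Integrable (fun u => r ^ n * V.indicator g u) μ :=
      (hg.indicator hVo.measurableSet).const_mul _
    have hmono : 0 ≤ ∫ u, (q ^ n * |g u| + r ^ n * V.indicator g u) ∂μ := by
      refine (h n).trans (integral_mono_ae (hg.bdd_mul (hφm.pow n) hφn) (habs.add hind) ?_)
      filter_upwards [hφ, hpeak] with u hφu hqu
      exact pow_mul_le_add_indicator hq0.le hr0.le hφu.1
        (fun hgu => (hqu hgu.not_gt).trans ((le_max_left _ _).trans hq.le)) hVsub n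
    rw [integral_add habs hind, integral_const_mul, integral_const_mul,
      integral_indicator hVo.measurableSet] at hmono
    rw [div_pow, div_mul_eq_mul_div, le_div_iff₀ (by positivity)]
    linarith
  have hlim : Tendsto (fun n : ℕ => (q / r) ^ n * ∫ u, |g u| ∂μ) atTop (nhds 0) := by
    simpa using (tendsto_pow_atTop_nhds_zero_of_lt_one (by positivity)
      ((div_lt_one hr0).2 hqr)).mul_const (∫ u, |g u| ∂μ)
  linarith [ge_of_tendsto' hlim hint]

end PeakFunction

/-- The Post–Widder weight `(u / x) e ^ (1 - u / x)`, normalised to have its maximum `1` at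
`u = x`. Its powers turn derivatives of a Laplace transform into averages concentrating at `x`. -/
noncomputable def postWidderWeight (x u : ℝ) : ℝ := u / x * Real.exp (1 - u / x)

section PostWidder

variable {g : ℝ → ℝ} {x u : ℝ}

lemma postWidderWeight_nonneg (hx : 0 < x) (hu : 0 ≤ u) : 0 ≤ postWidderWeight x u := by
  unfold postWidderWeight
  positivity

lemma postWidderWeight_le_one_sub_sq (hx : 0 < x) (hu : 0 ≤ u) :
    postWidderWeight x u ≤ 1 - ((u - x) / (u + x)) ^ 2 := by
  set y := u / x with hy
  have : 0 ≤ y := by positivity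
  have hexp : ((1 + y) / 2) ^ 2 ≤ Real.exp (y - 1) := by
    calc ((1 + y) / 2) ^ 2 ≤ Real.exp ((y - 1) / 2) ^ 2 := by
          refine pow_le_pow_left₀ (by positivity) ?_ 2
          linarith [Real.add_one_le_exp ((y - 1) / 2)]
      _ = Real.exp (y - 1) := by rw [← Real.exp_nat_mul]; ring_nf
  calc postWidderWeight x u = y / Real.exp (y - 1) := by
        rw [postWidderWeight, ← hy, div_eq_mul_inv, ← Real.exp_neg, neg_sub]
    _ ≤ y / ((1 + y) / 2) ^ 2 := by gcongr
    _ = 1 - ((u - x) / (u + x)) ^ 2 := by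
      rw [hy]
      field_simp
      ring

lemma exists_postWidderWeight_le {U : Set ℝ} (hx : 0 < x) (hU : U ∈ nhds x) :
    ∃ q < 1, ∀ u, 0 < u → u ∉ U → postWidderWeight x u ≤ q := by
  obtain ⟨ε, hε, hball⟩ := Metric.mem_nhds_iff.1 hU
  refine ⟨1 - (ε / (ε + 2 * x)) ^ 2, by linarith [(by positivity : 0 < (ε / (ε + 2 * x)) ^ 2)],
    fun u hu huU => (postWidderWeight_le_one_sub_sq hx hu.le).trans ?_⟩
  have hdist : ε ≤ |u - x| := by
    by_contra! hlt
    exact huU (hball hlt)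
  rw [← sq_abs ((u - x) / (u + x)), abs_div, abs_of_pos (add_pos hu hx)]
  gcongr 1 - ?_ ^ 2
  rw [div_le_div_iff₀ (by positivity) (by positivity)]
  nlinarith [le_abs_self (u - x)]

lemma nonneg_of_forall_integral_postWidderWeight_nonneg (hx : 0 < x)
    (hg : IntegrableOn g (Set.Ioi 0)) (hgc : ContinuousAt g x)
    (h : ∀ n : ℕ, 0 ≤ ∫ u in Set.Ioi 0, postWidderWeight x u ^ n * g u) : 0 ≤ g x := by
  have hcont : Continuous (postWidderWeight x) := by unfold postWidderWeight; fun_prop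
  refine nonneg_of_forall_integral_pow_mul_nonneg (fun V hV => ?_)
    hcont.aestronglyMeasurable hcont.continuousAt (by simp [postWidderWeight, hx.ne']) ?_
    (fun U hU => ?_) hg hgc h
  · rw [Measure.restrict_apply' measurableSet_Ioi]
    exact Measure.measure_pos_of_mem_nhds _ (Filter.inter_mem hV (Ioi_mem_nhds hx))
  · filter_upwards [ae_restrict_mem measurableSet_Ioi] with u hu
    have hu0 : 0 ≤ u := le_of_lt hu
    exact ⟨postWidderWeight_nonneg hx hu0,
      (postWidderWeight_le_one_sub_sq hx hu0).trans (sub_le_self _ (sq_nonneg _))⟩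
  · obtain ⟨q, hq, hle⟩ := exists_postWidderWeight_le hx hU
    refine ⟨q, hq, ?_⟩
    filter_upwards [ae_restrict_mem measurableSet_Ioi] with u hu using hle u hu

end PostWidder

section Moments

variable {α a c τ x t : ℝ}

lemma multichoose_pos (hx : 0 < x) (m : ℕ) : 0 < Ring.multichoose x m := by
  have hprod : 0 < (m.factorial : ℝ) * Ring.multichoose x m := by
    rw [factorial_mul_multichoose]
    exact Finset.prod_pos fun j _ => by positivity
  exact (mul_pos_iff_of_pos_left (by positivity)).1 hprod

lemma Gamma_add_natCast (hx : 0 < x) (m : ℕ) :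
    Real.Gamma (x + m) = Real.Gamma x * (m.factorial * Ring.multichoose x m) := by
  rw [factorial_mul_multichoose]
  induction m with
  | zero => simp
  | succ m ih =>
    rw [Nat.cast_succ, ← add_assoc, Real.Gamma_add_one (by positivity), ih,
      Finset.prod_range_succ]
    ring

lemma integral_pow_mul_exp_mul_rlKernel (hc : 0 < c) (hx : 0 < x) (m : ℕ) :
    ∫ u in Set.Ioi 0, u ^ m * Real.exp (-(c * u)) * rlKernel x u
      = (1 / c) ^ (x + m) * (m.factorial * Ring.multichoose x m) := by
  have hΓ := (Real.Gamma_pos_of_pos hx).ne'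
  calc ∫ u in Set.Ioi 0, u ^ m * Real.exp (-(c * u)) * rlKernel x u
      = ∫ u in Set.Ioi 0, (Real.Gamma x)⁻¹ * (u ^ (x + m - 1) * Real.exp (-(c * u))) := by
        refine setIntegral_congr_fun measurableSet_Ioi fun u hu => ?_
        rw [rlKernel, add_sub_right_comm, Real.rpow_add_natCast (ne_of_gt hu)]
        ring
    _ = (1 / c) ^ (x + m) * (m.factorial * Ring.multichoose x m) := by
      rw [integral_const_mul, Real.integral_rpow_mul_exp_neg_mul_Ioi (by positivity) hc,
        Gamma_add_natCast hx]
      field_simp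

lemma integrableOn_pow_mul_exp_mul_rlKernel (hc : 0 < c) (hx : 0 < x) (m : ℕ) :
    IntegrableOn (fun u => u ^ m * Real.exp (-(c * u)) * rlKernel x u) (Set.Ioi 0) := by
  refine Integrable.of_integral_ne_zero ?_
  rw [integral_pow_mul_exp_mul_rlKernel hc hx]
  have := multichoose_pos hx m
  positivity

lemma integral_pow_mul_exp_mul_mlKernel_term (hα : 0 < α) (hτ : 0 < τ) (hc : 0 < c) (b : ℝ)
    (m n : ℕ) :
    ∫ u in Set.Ioi 0, b ^ n * (u ^ m * Real.exp (-(c * u)) * rlKernel (α * n + τ) u)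
      = m.factorial * (1 / c) ^ (τ + m) *
        ((b / c ^ α) ^ n * Ring.multichoose (α * n + τ) m) := by
  have hpow : (1 / c) ^ (α * n + τ + m) = (1 / c) ^ (τ + m) / (c ^ α) ^ n := by
    rw [one_div, show α * n + τ + m = τ + m + α * n by ring, Real.rpow_add (by positivity),
      Real.rpow_mul (by positivity), Real.rpow_natCast, Real.inv_rpow hc.le α, inv_pow,
      ← div_eq_mul_inv]
  rw [integral_const_mul, integral_pow_mul_exp_mul_rlKernel hc (by positivity), hpow, div_pow]
  ring

lemma summable_integral_norm_mlKernel_term (hα : 0 < α) (hτ : 0 < τ) (hc : 0 < c) (ha : |a| < c ^ α)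
    (m : ℕ) : Summable fun n : ℕ =>
      ∫ u in Set.Ioi 0, ‖(-a) ^ n * (u ^ m * Real.exp (-(c * u)) * rlKernel (α * n + τ) u)‖ := by
  have hnorm : ∀ n : ℕ, ∫ u in Set.Ioi 0,
      ‖(-a) ^ n * (u ^ m * Real.exp (-(c * u)) * rlKernel (α * n + τ) u)‖
        = m.factorial * (1 / c) ^ (τ + m) *
          ((|a| / c ^ α) ^ n * Ring.multichoose (α * n + τ) m) := by
    intro n
    rw [← integral_pow_mul_exp_mul_mlKernel_term hα hτ hc]
    refine setIntegral_congr_fun measurableSet_Ioi fun u hu => ?_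
    have hu0 : 0 ≤ u := le_of_lt hu
    have hker := rlKernel_nonneg (τ := α * n + τ) (by positivity) hu0
    rw [norm_mul, norm_pow, norm_neg, Real.norm_eq_abs, Real.norm_of_nonneg (by positivity)]
  have hratio : |(|a| / c ^ α)| < 1 := by
    rw [abs_of_nonneg (by positivity), div_lt_one (by positivity)]
    exact ha
  simpa only [hnorm] using (summable_pow_mul_multichoose hratio α τ m).mul_left _

lemma hasSum_pow_mul_exp_mul_mlKernel (hα : 0 < α) (a c τ : ℝ) (m : ℕ) {u : ℝ} (hu : 0 < u) :
    HasSum (fun n : ℕ => (-a) ^ n * (u ^ m * Real.exp (-(c * u)) * rlKernel (α * n + τ) u))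
      (u ^ m * Real.exp (-(c * u)) * mlKernel α a τ u) := by
  simpa only [mul_left_comm] using
    (hasSum_mlKernel hα a τ hu).mul_left (u ^ m * Real.exp (-(c * u)))

lemma integrableOn_pow_mul_exp_mul_mlKernel (hα : 0 < α) (hτ : 0 < τ) (hc : 0 < c)
    (ha : |a| < c ^ α) (m : ℕ) :
    IntegrableOn (fun u => u ^ m * Real.exp (-(c * u)) * mlKernel α a τ u) (Set.Ioi 0) := by
  refine integrable_of_hasSum_of_summable_integral_norm
    (fun n => (integrableOn_pow_mul_exp_mul_rlKernel hc (by positivity) m).const_mul _)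
    (summable_integral_norm_mlKernel_term hα hτ hc ha m) ?_
  filter_upwards [ae_restrict_mem measurableSet_Ioi] with u hu
    using hasSum_pow_mul_exp_mul_mlKernel hα a c τ m hu

lemma integral_pow_mul_exp_mul_mlKernel (hα : 0 < α) (hτ : 0 < τ) (hc : 0 < c)
    (ha : |a| < c ^ α) (m : ℕ) :
    ∫ u in Set.Ioi 0, u ^ m * Real.exp (-(c * u)) * mlKernel α a τ u
      = m.factorial * (1 / c) ^ (τ + m) *
        ∑' n : ℕ, (-(a / c ^ α)) ^ n * Ring.multichoose (α * n + τ) m := by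
  rw [← tsum_mul_left, ← neg_div]
  simp only [← integral_pow_mul_exp_mul_mlKernel_term hα hτ hc]
  rw [integral_tsum_of_summable_integral_norm
    (fun n => (integrableOn_pow_mul_exp_mul_rlKernel hc (by positivity) m).const_mul _)
    (summable_integral_norm_mlKernel_term hα hτ hc ha m)]
  exact setIntegral_congr_fun measurableSet_Ioi fun u hu =>
    (hasSum_pow_mul_exp_mul_mlKernel hα a c τ m hu).tsum_eq.symm

lemma integral_pow_mul_exp_mul_mlKernel_critical_nonneg (hα : 0 < α) (hα2 : α ≤ 2) (ha : 0 < a)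
    (hc : 0 < c) (hac : a < c ^ α) (m : ℕ) :
    0 ≤ ∫ u in Set.Ioi 0, u ^ m * Real.exp (-(c * u)) * mlKernel α a (3 * (α / 2)) u := by
  rw [integral_pow_mul_exp_mul_mlKernel hα (by positivity) hc (by rwa [abs_of_pos ha])]
  have hnonneg := tsum_neg_pow_mul_multichoose_nonneg (β := α / 2) (c := a / c ^ α)
    (by positivity) (by linarith) (by positivity) ((div_lt_one (by positivity)).2 hac) m
  rw [mul_div_cancel₀ α two_ne_zero] at hnonneg
  positivity

-- Powers of the Post–Widder weight move the abscissa from `c` to `d = c + m / t`. Both satisfy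
-- `a < c ^ α`, which is what makes the transform expand in powers of `a / d ^ α`.
lemma mlKernel_critical_nonneg (hα : 0 < α) (hα2 : α ≤ 2) (ha : 0 < a) (ht : 0 < t) :
    0 ≤ mlKernel α a (3 * (α / 2)) t := by
  set c := (a + 1) ^ α⁻¹ with hc
  have hc0 : 0 < c := by positivity
  have hac : a < c ^ α := by
    rw [hc, Real.rpow_inv_rpow (by positivity) hα.ne']
    linarith
  have hint := integrableOn_pow_mul_exp_mul_mlKernel (τ := 3 * (α / 2)) hα (by positivity) hc0
    ((abs_of_pos ha).trans_lt hac) 0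
  simp only [pow_zero, one_mul] at hint
  have hcont : ContinuousAt (fun u => Real.exp (-(c * u)) * mlKernel α a (3 * (α / 2)) u) t :=
    ContinuousAt.mul (by fun_prop)
      ((continuousOn_mlKernel hα a _).continuousAt (Ioi_mem_nhds ht))
  suffices hmoments : ∀ m : ℕ, 0 ≤ ∫ u in Set.Ioi 0, postWidderWeight t u ^ m *
      (Real.exp (-(c * u)) * mlKernel α a (3 * (α / 2)) u) by
    have hprod := nonneg_of_forall_integral_postWidderWeight_nonneg ht hint hcont hmoments
    exact (mul_nonneg_iff_of_pos_left (Real.exp_pos _)).1 hprod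
  intro m
  set d := c + m / t with hd
  have hcd : c ≤ d := le_add_of_nonneg_right (by positivity)
  have hshift : ∀ u, postWidderWeight t u ^ m * (Real.exp (-(c * u)) * mlKernel α a (3 * (α / 2)) u)
      = (Real.exp 1 / t) ^ m
        * (u ^ m * Real.exp (-(d * u)) * mlKernel α a (3 * (α / 2)) u) := by
    intro u
    have hexp : Real.exp (-(d * u)) = Real.exp (-(u / t)) ^ m * Real.exp (-(c * u)) := by
      rw [← Real.exp_nat_mul, ← Real.exp_add, hd]
      ring_nf
    rw [postWidderWeight, hexp, sub_eq_add_neg, Real.exp_add]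
    ring
  simp_rw [hshift, integral_const_mul]
  refine mul_nonneg (by positivity) (integral_pow_mul_exp_mul_mlKernel_critical_nonneg hα hα2 ha
    (hc0.trans_le hcd) (hac.trans_le ?_) m)
  gcongr

lemma mlKernel_nonneg (hα : 0 < α) (hα2 : α ≤ 2) (ha : 0 < a) (hτ : 3 * (α / 2) ≤ τ)
    (ht : 0 < t) : 0 ≤ mlKernel α a τ t := by
  rcases hτ.eq_or_lt with rfl | hlt
  · exact mlKernel_critical_nonneg hα hα2 ha ht
  rw [← sub_add_cancel τ (3 * (α / 2)),
    ← causalConv_rlKernel_mlKernel hα a (sub_pos.2 hlt) (by positivity) ht, causalConv,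
    intervalIntegral.integral_of_le ht.le]
  refine setIntegral_nonneg measurableSet_Ioc fun u hu => ?_
  exact mul_nonneg (rlKernel_nonneg (sub_pos.2 hlt) (sub_nonneg.2 hu.2))
    (mlKernel_critical_nonneg hα hα2 ha hu.1)

lemma mlKernel_le_rlKernel (hα : 0 < α) (hα2 : α ≤ 2) (ha : 0 < a) (hτ : 3 * (α / 2) ≤ τ)
    (ht : 0 < t) : mlKernel α a τ t ≤ rlKernel τ t := by
  rw [mlKernel_eq_rlKernel_sub hα a τ ht]
  exact sub_le_self _ (mul_nonneg ha.le (mlKernel_nonneg hα hα2 ha (by linarith) ht))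

lemma abs_mlKernel_le (hα : 0 < α) (hα2 : α ≤ 2) (ha : 0 < a) (hτ : α / 2 ≤ τ) (ht : 0 < t) :
    |mlKernel α a τ t| ≤ rlKernel τ t + a * rlKernel (τ + α) t := by
  have hnonneg := mlKernel_nonneg hα hα2 ha (by linarith : 3 * (α / 2) ≤ τ + α) ht
  have hle := mlKernel_le_rlKernel hα hα2 ha (by linarith : 3 * (α / 2) ≤ τ + α) ht
  have hrl := rlKernel_nonneg (by linarith : 0 < τ) ht.le
  rw [mlKernel_eq_rlKernel_sub hα a τ ht, abs_le]
  constructor <;> nlinarith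

end Moments

/-! ### Decay of the Mittag-Leffler kernels -/

/-- The weight `e ^ (-c u)` makes `g` integrable on `(0, ∞)`, so that the Laplace transform of `g`
converges absolutely on the line `Re z = c`. -/
def LaplaceIntegrable (g : ℝ → ℝ) (c : ℝ) : Prop :=
  IntegrableOn (fun u => Real.exp (-(c * u)) * g u) (Set.Ioi 0)

/-- The Laplace transform of a real function on `(0, ∞)`. -/
noncomputable def laplace (g : ℝ → ℝ) (z : ℂ) : ℂ :=
  ∫ u in Set.Ioi (0 : ℝ), Complex.exp (-(z * u)) * g u

section Laplace

variable {g : ℝ → ℝ} {c c' t : ℝ} {z : ℂ}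

lemma norm_cexp_neg_mul_ofReal (z : ℂ) (u : ℝ) :
    ‖Complex.exp (-(z * u))‖ = Real.exp (-(z.re * u)) := by
  rw [Complex.norm_exp, Complex.neg_re, Complex.re_mul_ofReal]

lemma LaplaceIntegrable.aestronglyMeasurable (hg : LaplaceIntegrable g c) :
    AEStronglyMeasurable g (volume.restrict (Set.Ioi 0)) := by
  have hexp : Continuous fun u => Real.exp (c * u) := by fun_prop
  refine (hexp.aestronglyMeasurable.mul
    (Integrable.aestronglyMeasurable hg)).congr (.of_forall fun u => ?_)
  simp only [Pi.mul_apply]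
  rw [← mul_assoc, ← Real.exp_add, add_neg_cancel, Real.exp_zero, one_mul]

lemma LaplaceIntegrable.integrableOn (hg : LaplaceIntegrable g z.re) :
    IntegrableOn (fun u : ℝ => Complex.exp (-(z * u)) * g u) (Set.Ioi 0) := by
  have hexp : Continuous fun u : ℝ => Complex.exp (-(z * u)) := by fun_prop
  refine Integrable.mono hg (hexp.aestronglyMeasurable.mul
    (Complex.continuous_ofReal.comp_aestronglyMeasurable hg.aestronglyMeasurable))
    (.of_forall fun u => ?_)
  rw [norm_mul, norm_mul, norm_cexp_neg_mul_ofReal, Complex.norm_real,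
    Real.norm_of_nonneg (Real.exp_nonneg _)]

lemma LaplaceIntegrable.id_mul (hg : LaplaceIntegrable g c) (hc : c < c') :
    LaplaceIntegrable (fun u => u * g u) c' := by
  refine Integrable.mono' (hg.norm.const_mul (1 / (c' - c)))
    (AEStronglyMeasurable.mul (by fun_prop)
      (AEStronglyMeasurable.mul (by fun_prop) hg.aestronglyMeasurable)) ?_
  refine (ae_restrict_mem measurableSet_Ioi).mono fun u (hu : 0 < u) => ?_
  have hcc : 0 < c' - c := sub_pos.2 hc
  have hexp : u * Real.exp (-(c' * u)) ≤ 1 / (c' - c) * Real.exp (-(c * u)) := by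
    have hlin := Real.add_one_le_exp ((c' - c) * u)
    have hsplit : Real.exp (-(c * u)) = Real.exp ((c' - c) * u) * Real.exp (-(c' * u)) := by
      rw [← Real.exp_add]
      ring_nf
    rw [hsplit, ← mul_assoc]
    gcongr
    rw [div_mul_eq_mul_div, one_mul, le_div_iff₀ hcc]
    linarith
  rw [norm_mul, norm_mul, norm_mul, Real.norm_of_nonneg hu.le,
    Real.norm_of_nonneg (Real.exp_nonneg _), Real.norm_of_nonneg (Real.exp_nonneg _)]
  calc Real.exp (-(c' * u)) * (u * ‖g u‖) = u * Real.exp (-(c' * u)) * ‖g u‖ := by ring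
    _ ≤ 1 / (c' - c) * Real.exp (-(c * u)) * ‖g u‖ := by gcongr
    _ = _ := by ring

lemma LaplaceIntegrable.mono (hg : LaplaceIntegrable g c) (hc : c ≤ c') :
    LaplaceIntegrable g c' := by
  refine Integrable.mono hg
    (AEStronglyMeasurable.mul (by fun_prop) hg.aestronglyMeasurable) ?_
  refine (ae_restrict_mem measurableSet_Ioi).mono fun u (hu : 0 < u) => ?_
  rw [norm_mul, norm_mul, Real.norm_of_nonneg (Real.exp_nonneg _),
    Real.norm_of_nonneg (Real.exp_nonneg _)]
  gcongr

lemma hasDerivAt_laplace (hg : LaplaceIntegrable g c) (hz : c < z.re) :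
    HasDerivAt (laplace g) (-laplace (fun u => u * g u) z) z := by
  obtain ⟨d, hcd, hdz⟩ := exists_between hz
  have hug : LaplaceIntegrable (fun u => u * g u) d := hg.id_mul hcd
  have hg_meas : AEStronglyMeasurable (fun u => (g u : ℂ)) (volume.restrict (Set.Ioi 0)) :=
    Complex.continuous_ofReal.comp_aestronglyMeasurable hg.aestronglyMeasurable
  have hderiv := (hasDerivAt_integral_of_dominated_loc_of_deriv_le
    (μ := volume.restrict (Set.Ioi (0 : ℝ)))
    (F := fun (w : ℂ) (u : ℝ) => Complex.exp (-(w * u)) * g u)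
    (F' := fun (w : ℂ) (u : ℝ) => -(Complex.exp (-(w * u)) * ((u * g u : ℝ) : ℂ)))
    (bound := fun u => ‖Real.exp (-(d * u)) * (u * g u)‖)
    ((isOpen_lt continuous_const Complex.continuous_re).mem_nhds hdz)
    (.of_forall fun w => AEStronglyMeasurable.mul (by fun_prop) hg_meas)
    (LaplaceIntegrable.integrableOn (hg.mono hz.le))
    (LaplaceIntegrable.integrableOn (hg.id_mul hz)).aestronglyMeasurable.neg
    ?_ hug.norm (.of_forall fun u w _ => ?_)).2
  · rwa [integral_neg] at hderiv
  · refine (ae_restrict_mem measurableSet_Ioi).mono fun u (hu : 0 < u) w (hw : d < w.re) => ?_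
    rw [norm_neg, norm_mul, norm_mul, norm_cexp_neg_mul_ofReal, Complex.norm_real,
      Real.norm_of_nonneg (Real.exp_nonneg _)]
    gcongr
  · refine ((hasDerivAt_mul_const (u : ℂ)).neg.cexp.mul_const (g u : ℂ)).congr_deriv ?_
    push_cast
    simp only [Pi.neg_apply]
    ring

lemma fourier_indicator_eq_laplace (g : ℝ → ℝ) (c : ℝ) :
    FourierTransform.fourier ((Set.Ioi (0 : ℝ)).indicator
        fun u => ((Real.exp (-(c * u)) * g u : ℝ) : ℂ))
      = fun y : ℝ => laplace g (c + (2 * Real.pi * y : ℝ) * Complex.I) := by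
  funext y
  rw [Real.fourier_real_eq_integral_exp_smul, laplace, ← integral_indicator measurableSet_Ioi]
  congr 1
  funext u
  by_cases hu : u ∈ Set.Ioi (0:ℝ)
  · rw [Set.indicator_of_mem hu, Set.indicator_of_mem hu, smul_eq_mul]
    push_cast
    rw [← mul_assoc, ← Complex.exp_add]
    ring_nf
  · rw [Set.indicator_of_notMem hu, Set.indicator_of_notMem hu, smul_zero]

lemma abs_le_integral_norm_laplace (hg : LaplaceIntegrable g c) (ht : 0 < t)
    (hgt : ContinuousAt g t) (hint : Integrable fun y : ℝ => laplace g (c + y * Complex.I)) :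
    |g t| ≤ Real.exp (c * t) / (2 * Real.pi) * ∫ y : ℝ, ‖laplace g (c + y * Complex.I)‖ := by
  set F : ℝ → ℂ := (Set.Ioi (0 : ℝ)).indicator
    fun u => ((Real.exp (-(c * u)) * g u : ℝ) : ℂ) with hF
  have hF_int : Integrable F :=
    (integrable_indicator_iff measurableSet_Ioi).2 (Integrable.ofReal hg)
  have hF_fourier := fourier_indicator_eq_laplace g c
  have hF_cont : ContinuousAt F t := by
    have h : ContinuousAt (fun u => ((Real.exp (-(c * u)) * g u : ℝ) : ℂ)) t := by fun_prop
    refine h.congr ?_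
    filter_upwards [Ioi_mem_nhds ht] with u hu
    rw [hF, Set.indicator_of_mem hu]
  have hF_fourier_int : Integrable (FourierTransform.fourier F) := by
    rw [hF_fourier]
    exact hint.comp_mul_left' (by positivity)
  have hFt : ‖F t‖ = Real.exp (-(c * t)) * |g t| := by
    rw [hF, Set.indicator_of_mem (Set.mem_Ioi.2 ht), Complex.norm_real, Real.norm_eq_abs, abs_mul,
      abs_of_pos (Real.exp_pos _)]
  have hbound : ‖F t‖ ≤ (2 * Real.pi)⁻¹ * ∫ y : ℝ, ‖laplace g (c + y * Complex.I)‖ := by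
    rw [← hF_int.fourierInv_fourier_eq hF_fourier_int hF_cont, Real.fourierInv_eq]
    refine (norm_integral_le_integral_norm _).trans_eq ?_
    simp only [Circle.norm_smul]
    rw [hF_fourier, Measure.integral_comp_mul_left
      (fun y : ℝ => ‖laplace g (c + y * Complex.I)‖), smul_eq_mul, abs_of_pos (by positivity)]
  rw [hFt, Real.exp_neg, inv_mul_le_iff₀ (Real.exp_pos _)] at hbound
  rwa [div_eq_mul_inv, mul_assoc]

end Laplace

section MittagLefflerDecay

open scoped Topology

variable {α a τ η c t : ℝ} {z : ℂ}

lemma isOpen_setOf_re_pos : IsOpen {z : ℂ | 0 < z.re} :=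
  isOpen_lt continuous_const Complex.continuous_re

lemma eqOn_re_pos_of_eq_ofReal {F G : ℂ → ℂ} (hF : DifferentiableOn ℂ F {z | 0 < z.re})
    (hG : DifferentiableOn ℂ G {z | 0 < z.re})
    (hFG : ∀ᶠ c : ℝ in atTop, F c = G c) : Set.EqOn F G {z | 0 < z.re} := by
  obtain ⟨c₀, hc₀⟩ := eventually_atTop.1 hFG
  set d := max c₀ 0 + 1
  have hd0 : 0 < d := by positivity
  have hcd : c₀ < d := (le_max_left _ _).trans_lt (lt_add_one _)
  refine (hF.analyticOnNhd isOpen_setOf_re_pos).eqOn_of_preconnected_of_frequently_eq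
    (hG.analyticOnNhd isOpen_setOf_re_pos) (convex_halfSpace_re_gt 0).isPreconnected
    (z₀ := (d : ℂ)) (by simpa using hd0) ?_
  have htendsto : Tendsto (fun x : ℝ => (x : ℂ)) (𝓝[≠] d) (𝓝[≠] (d : ℂ)) :=
    (Complex.continuous_ofReal.tendsto d).inf
      (tendsto_principal_principal.2 fun x hx => by simpa using hx)
  refine htendsto.frequently (Eventually.frequently ?_)
  filter_upwards [nhdsWithin_le_nhds (Ioi_mem_nhds hcd)] with x hx using hc₀ x (le_of_lt hx)

lemma LaplaceIntegrable.mlKernel (hα : 0 < α) (hα2 : α ≤ 2) (ha : 0 < a) (hτ : α / 2 ≤ τ)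
    (hc : 0 < c) : LaplaceIntegrable (mlKernel α a τ) c := by
  have hτ0 : 0 < τ := by linarith
  have hrl {σ : ℝ} (hσ : 0 < σ) :
      IntegrableOn (fun u => Real.exp (-(c * u)) * rlKernel σ u) (Set.Ioi 0) := by
    simpa using integrableOn_pow_mul_exp_mul_rlKernel hc hσ 0
  refine Integrable.mono' ((hrl hτ0).add ((hrl (add_pos hτ0 hα)).const_mul a))
    (AEStronglyMeasurable.mul (by fun_prop)
      ((continuousOn_mlKernel hα a τ).aestronglyMeasurable measurableSet_Ioi)) ?_
  refine (ae_restrict_mem measurableSet_Ioi).mono fun u (hu : 0 < u) => ?_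
  rw [norm_mul, Real.norm_of_nonneg (Real.exp_nonneg _), Real.norm_eq_abs, Pi.add_apply,
    mul_left_comm, ← mul_add]
  gcongr
  exact abs_mlKernel_le hα hα2 ha hτ hu

lemma cos_mul_arg_ge (hα : 0 ≤ α) (hα2 : α ≤ 2) (hz : 0 ≤ z.re) :
    Real.cos (α * (Real.pi / 2)) ≤ Real.cos (z.arg * α) := by
  have harg := Complex.abs_arg_le_pi_div_two_iff.2 hz
  rw [← Real.cos_abs (z.arg * α), abs_mul, abs_of_nonneg hα]
  exact Real.cos_le_cos_of_nonneg_of_le_pi (by positivity) (by nlinarith [Real.pi_pos])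
    (by nlinarith)

-- On the half-plane `|arg (z ^ α)| < πα/2 < π`, so `z ^ α` and `a` cannot cancel.
lemma exists_mul_norm_rpow_add_le_norm_cpow_add (hα : 0 < α) (hα2 : α < 2) (ha : 0 < a) :
    ∃ κ > 0, ∀ z : ℂ, 0 < z.re → κ * (‖z‖ ^ α + a) ≤ ‖z ^ (α : ℂ) + a‖ := by
  set q := max (-Real.cos (α * (Real.pi / 2))) 0
  have : 0 ≤ q := le_max_right _ _
  have hq1 : q < 1 := by
    have hcos : Real.cos Real.pi < Real.cos (α * (Real.pi / 2)) :=
      Real.cos_lt_cos_of_nonneg_of_le_pi (by positivity) le_rfl (by nlinarith [Real.pi_pos])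
    rw [Real.cos_pi] at hcos
    exact max_lt (by linarith) one_pos
  refine ⟨Real.sqrt ((1 - q) / 2), Real.sqrt_pos.2 (by linarith), fun z hz => ?_⟩
  set R := ‖z‖ ^ α
  have : 0 ≤ R := by positivity
  have hcos : -q ≤ Real.cos (z.arg * α) := by
    linarith [cos_mul_arg_ge hα.le hα2.le hz.le, le_max_left (-Real.cos (α * (Real.pi / 2))) 0]
  have hval : z ^ (α : ℂ) + a = ⟨R * Real.cos (z.arg * α) + a, R * Real.sin (z.arg * α)⟩ := by
    rw [Complex.cpow_ofReal, Complex.mk_eq_add_mul_I]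
    push_cast
    ring
  have hsq : (Real.sqrt ((1 - q) / 2) * (R + a)) ^ 2 ≤ ‖z ^ (α : ℂ) + a‖ ^ 2 := by
    rw [hval, mul_pow, Real.sq_sqrt (by linarith), Complex.sq_norm, Complex.normSq_mk]
    have hcross : 0 ≤ R * a * (Real.cos (z.arg * α) + q) :=
      mul_nonneg (by positivity) (by linarith)
    have hdiff : 0 ≤ (1 + q) * (R - a) ^ 2 := by positivity
    have hpyth : R ^ 2 * (Real.sin (z.arg * α) ^ 2 + Real.cos (z.arg * α) ^ 2) = R ^ 2 := by
      rw [Real.sin_sq_add_cos_sq, mul_one]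
    nlinarith
  exact (sq_le_sq₀ (by positivity) (norm_nonneg _)).1 hsq

lemma cpow_add_ofReal_ne_zero (hα : 0 < α) (hα2 : α < 2) (ha : 0 < a) (hz : 0 < z.re) :
    z ^ (α : ℂ) + a ≠ 0 := by
  obtain ⟨κ, hκ, hbound⟩ := exists_mul_norm_rpow_add_le_norm_cpow_add hα hα2 ha
  exact norm_pos_iff.1 (lt_of_lt_of_le (by positivity) (hbound z hz))

lemma laplace_mlKernel_ofReal (hα : 0 < α) (hτ : 0 < τ) (ha : 0 < a) (hc : 0 < c)
    (hac : a < c ^ α) :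
    laplace (mlKernel α a τ) c = (c : ℂ) ^ ((α - τ : ℝ) : ℂ) / ((c : ℂ) ^ (α : ℂ) + a) := by
  have hreal : ∫ u in Set.Ioi 0, Real.exp (-(c * u)) * mlKernel α a τ u
      = c ^ (α - τ) / (c ^ α + a) := by
    have hcα : 0 < c ^ α := by positivity
    have h := integral_pow_mul_exp_mul_mlKernel hα hτ hc ((abs_of_pos ha).trans_lt hac) 0
    simp only [pow_zero, one_mul, Nat.factorial_zero, Nat.cast_one, Nat.cast_zero, add_zero,
      Ring.multichoose_zero_right, mul_one] at h
    rw [h, tsum_geometric_of_abs_lt_one (by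
      rw [abs_neg, abs_of_pos (by positivity)]; exact (div_lt_one hcα).2 hac),
      Real.rpow_sub hc, one_div, Real.inv_rpow hc.le, sub_neg_eq_add]
    field_simp
  rw [laplace, ← Complex.ofReal_cpow hc.le, ← Complex.ofReal_cpow hc.le, ← Complex.ofReal_add,
    ← Complex.ofReal_div, ← hreal, ← integral_complex_ofReal]
  push_cast
  rfl

lemma hasDerivAt_cpow_div_cpow_add (hα : 0 < α) (hα2 : α < 2) (ha : 0 < a) (τ : ℝ)
    (hz : 0 < z.re) :
    HasDerivAt (fun z : ℂ => z ^ ((α - τ : ℝ) : ℂ) / (z ^ (α : ℂ) + a))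
      ((((α - τ : ℝ) : ℂ) * z ^ ((α - τ - 1 : ℝ) : ℂ) * (z ^ (α : ℂ) + a)
        - z ^ ((α - τ : ℝ) : ℂ) * (α * z ^ ((α - 1 : ℝ) : ℂ))) / (z ^ (α : ℂ) + a) ^ 2) z := by
  have hcpow (s : ℝ) : HasDerivAt (fun z : ℂ => z ^ (s : ℂ)) (s * z ^ ((s - 1 : ℝ) : ℂ)) z := by
    simpa using (hasDerivAt_id z).cpow_const (c := (s : ℂ)) (Or.inl hz)
  exact (hcpow _).div ((hcpow α).add_const _) (cpow_add_ofReal_ne_zero hα hα2 ha hz)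

lemma laplace_mlKernel (hα : 0 < α) (hα2 : α < 2) (ha : 0 < a) (hτ : α / 2 ≤ τ)
    (hz : 0 < z.re) :
    laplace (mlKernel α a τ) z = z ^ ((α - τ : ℝ) : ℂ) / (z ^ (α : ℂ) + a) := by
  refine eqOn_re_pos_of_eq_ofReal
    (F := laplace (mlKernel α a τ)) (G := fun z => z ^ ((α - τ : ℝ) : ℂ) / (z ^ (α : ℂ) + a))
    (fun w (hw : 0 < w.re) => ?_) (fun w hw => ?_) ?_ hz
  · obtain ⟨d, hd, hdw⟩ := exists_between hw
    exact (hasDerivAt_laplace (LaplaceIntegrable.mlKernel hα hα2.le ha hτ hd)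
      hdw).differentiableAt.differentiableWithinAt
  · exact (hasDerivAt_cpow_div_cpow_add hα hα2 ha τ hw).differentiableAt.differentiableWithinAt
  · filter_upwards [(tendsto_rpow_atTop hα).eventually_gt_atTop a, eventually_gt_atTop 0]
      with c hac hc
    exact laplace_mlKernel_ofReal hα (by linarith) ha hc hac

lemma norm_cpow_div_deriv_le {P x y N κ s : ℝ} (hP : 0 ≤ P) (hx : 0 ≤ x) (hy : 0 < y)
    (hκ : 0 < κ) (hs : 0 ≤ s) (hα : 0 ≤ α) (hN : κ * (x + y) ≤ N) :
    (s * P * N + α * (P * x)) / N ^ 2 ≤ (s / κ + α / κ ^ 2) * (P / (x + y)) := by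
  have hD : 0 < x + y := by positivity
  have hN0 : 0 < N := lt_of_lt_of_le (by positivity) hN
  have hfirst : 1 / N ≤ 1 / (κ * (x + y)) := one_div_le_one_div_of_le (by positivity) hN
  have hsecond : x / N ^ 2 ≤ 1 / (κ ^ 2 * (x + y)) := by
    have hsq : (κ * (x + y)) ^ 2 ≤ N ^ 2 := by gcongr
    rw [div_le_div_iff₀ (by positivity) (by positivity)]
    nlinarith [mul_nonneg (sq_nonneg κ) (mul_nonneg hD.le hy.le)]
  calc (s * P * N + α * (P * x)) / N ^ 2 = s * P * (1 / N) + α * P * (x / N ^ 2) := by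
        field_simp
    _ ≤ s * P * (1 / (κ * (x + y))) + α * P * (1 / (κ ^ 2 * (x + y))) := by gcongr
    _ = (s / κ + α / κ ^ 2) * (P / (x + y)) := by field_simp

-- The transform of `u * g u` is minus the derivative of the transform of `g`.
lemma exists_norm_laplace_id_mul_mlKernel_le (hα : 0 < α) (hα2 : α < 2) (ha : 0 < a)
    (hτ : α / 2 ≤ τ) :
    ∃ C > 0, ∀ z : ℂ, 0 < z.re → ‖laplace (fun u => u * mlKernel α a τ u) z‖
      ≤ C * (‖z‖ ^ (α - τ - 1) / (‖z‖ ^ α + a)) := by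
  obtain ⟨κ, hκ, hbound⟩ := exists_mul_norm_rpow_add_le_norm_cpow_add hα hα2 ha
  refine ⟨|α - τ| / κ + α / κ ^ 2, by positivity, fun z hz => ?_⟩
  obtain ⟨d, hd, hdz⟩ := exists_between hz
  have hz0 : 0 < ‖z‖ := norm_pos_iff.2 (by rintro rfl; simp at hz)
  have hderiv := (hasDerivAt_laplace (LaplaceIntegrable.mlKernel hα hα2.le ha hτ hd) hdz).unique
    ((hasDerivAt_cpow_div_cpow_add hα hα2 ha τ hz).congr_of_eventuallyEq
      (eventually_of_mem (isOpen_setOf_re_pos.mem_nhds hz)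
        fun w hw => laplace_mlKernel hα hα2 ha hτ hw))
  have hpow : ‖z‖ ^ (α - τ) * ‖z‖ ^ (α - 1) = ‖z‖ ^ (α - τ - 1) * ‖z‖ ^ α := by
    rw [← Real.rpow_add hz0, ← Real.rpow_add hz0]
    ring_nf
  rw [← norm_neg, hderiv, norm_div, norm_pow]
  refine le_trans ?_ (norm_cpow_div_deriv_le (by positivity) (by positivity) ha hκ
    (abs_nonneg _) hα.le (hbound z hz))
  gcongr
  refine (norm_sub_le _ _).trans_eq ?_
  simp only [norm_mul, Complex.norm_real, Complex.norm_cpow_real, Real.norm_eq_abs, abs_of_pos hα]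
  rw [mul_left_comm, hpow]

lemma integrable_comp_abs_of_integrableOn_Ioi {f : ℝ → ℝ} (hf : IntegrableOn f (Set.Ioi 0)) :
    Integrable fun x => f |x| := by
  have hpos : IntegrableOn (fun x => f |x|) (Set.Ioi 0) :=
    hf.congr_fun (fun x (hx : 0 < x) => by rw [abs_of_pos hx]) measurableSet_Ioi
  have hneg : IntegrableOn (fun x => f |x|) (Set.Iic 0) := by
    have h := (integrableOn_Ici_iff_integrableOn_Ioi enorm_ne_top).2 hpos
    rw [← Measure.map_neg_eq_self volume] at h
    simpa [Function.comp_def] using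
      (Homeomorph.neg ℝ).measurableEmbedding.integrableOn_map_iff.1 h
  rw [← integrableOn_univ, ← Set.Iic_union_Ioi]
  exact hneg.union hpos

lemma integrableOn_rpow_div_rpow_add {β : ℝ} (ha : 0 < a) (hβ : 0 < β) (hβα : β < α) :
    IntegrableOn (fun x => x ^ (β - 1) / (x ^ α + a)) (Set.Ioi 0) := by
  have hα : 0 < α := hβ.trans hβα
  have hpos : ∀ x : ℝ, 0 ≤ x → x ^ α + a ≠ 0 := fun x hx => by positivity
  have hcont : ContinuousOn (fun x : ℝ => (x ^ α + a)⁻¹) (Set.Ici 0) :=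
    ((Real.continuous_rpow_const hα.le).continuousOn.add continuousOn_const).inv₀ hpos
  refine (mellin_convergent_of_isBigO_scalar (a := α) (b := 0) (f := fun x => (x ^ α + a)⁻¹)
    ((hcont.mono Set.Ioi_subset_Ici_self).locallyIntegrableOn measurableSet_Ioi)
    (.of_bound 1 ?_) hβα (.of_bound a⁻¹ ?_) hβ).congr_fun (fun x _ => rfl) measurableSet_Ioi
  · filter_upwards [eventually_gt_atTop 0] with x hx
    rw [one_mul, Real.rpow_neg hx.le, norm_inv, norm_inv]
    have : 0 < x ^ α := by positivity
    rw [Real.norm_of_nonneg (by positivity), Real.norm_of_nonneg (by positivity)]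
    gcongr
    linarith
  · filter_upwards [self_mem_nhdsWithin] with x (hx : 0 < x)
    have : 0 < x ^ α := by positivity
    rw [neg_zero, Real.rpow_zero, norm_one, mul_one, Real.norm_of_nonneg (by positivity)]
    gcongr
    linarith

lemma rpow_div_rpow_add_le {x y β : ℝ} (ha : 0 < a) (hα : 0 ≤ α) (hη : 0 ≤ η) (ht : 0 < t)
    (hβ : β ≤ 1) (hx : 1 / t ≤ x) (hy : 0 < y) (hyx : y ≤ x) :
    x ^ (β - η - 1) / (x ^ α + a) ≤ t ^ η * (y ^ (β - 1) / (y ^ α + a)) := by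
  have hx0 : 0 < x := hy.trans_le hyx
  have hxη : x ^ (-η) ≤ t ^ η := by
    calc x ^ (-η) ≤ (1 / t) ^ (-η) :=
          Real.rpow_le_rpow_of_nonpos (by positivity) hx (neg_nonpos.2 hη)
      _ = t ^ η := by
        rw [one_div, Real.inv_rpow ht.le, Real.rpow_neg ht.le, inv_inv]
  have hxβ : x ^ (β - 1) ≤ y ^ (β - 1) := Real.rpow_le_rpow_of_nonpos hy hyx (by linarith)
  rw [show β - η - 1 = -η + (β - 1) by ring, Real.rpow_add hx0, mul_div_assoc]
  gcongr

-- Fourier inversion of `u * mlKernel α a τ u` on the line `Re z = 1 / t`, where `e ^ (z t)` is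
-- bounded; the factor `u` makes the transform integrable along the line.
lemma exists_abs_mlKernel_le_rpow_of_lt (hα : 0 < α) (hα2 : α < 2) (ha : 0 < a) (hτ : α / 2 ≤ τ)
    (hη : 0 ≤ η) (hητ : τ - α < η) (hη1 : η ≤ 1 + τ - α) (hη2 : η < τ) :
    ∃ C, ∀ t > 0, |mlKernel α a τ t| ≤ C * t ^ (η - 1) := by
  obtain ⟨K, hK, hlaplace⟩ := exists_norm_laplace_id_mul_mlKernel_le hα hα2 ha hτ
  set β := α - τ + η with hβ
  set Q : ℝ → ℝ := fun y => |y| ^ (β - 1) / (|y| ^ α + a)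
  have hQ_int : Integrable Q := integrable_comp_abs_of_integrableOn_Ioi
    (integrableOn_rpow_div_rpow_add ha (by linarith) (by linarith))
  refine ⟨Real.exp 1 / (2 * Real.pi) * (K * ∫ y, Q y), fun t ht => ?_⟩
  set L : ℝ → ℂ := fun y => laplace (fun u => u * mlKernel α a τ u) ((1 / t : ℝ) + y * Complex.I)
  have hc : 0 < 1 / t := by positivity
  have hre (y : ℝ) : ((1 / t : ℝ) + y * Complex.I : ℂ).re = 1 / t := by simp
  have him (y : ℝ) : ((1 / t : ℝ) + y * Complex.I : ℂ).im = y := by simp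
  have hu_int : LaplaceIntegrable (fun u => u * mlKernel α a τ u) (1 / t / 2) :=
    (LaplaceIntegrable.mlKernel hα hα2.le ha hτ (by positivity : 0 < 1 / t / 4)).id_mul
      (by linarith)
  have hL_bound : ∀ᵐ y : ℝ, ‖L y‖ ≤ K * (t ^ η * Q y) := by
    filter_upwards [compl_mem_ae_iff.2 (measure_singleton (0 : ℝ))] with y hy
    refine (hlaplace _ ((hre y).symm ▸ hc)).trans ?_
    gcongr
    rw [show α - τ - 1 = β - η - 1 by rw [hβ]; ring]
    refine rpow_div_rpow_add_le ha hα.le hη ht (by linarith) ?_ (abs_pos.2 hy) ?_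
    · simpa only [hre] using Complex.re_le_norm ((1 / t : ℝ) + y * Complex.I)
    · simpa only [him] using Complex.abs_im_le_norm ((1 / t : ℝ) + y * Complex.I)
  have hL_cont : Continuous L := continuous_iff_continuousAt.2 fun y =>
    (hasDerivAt_laplace hu_int (by rw [hre]; linarith)).continuousAt.comp
      (f := fun y : ℝ => ((1 / t : ℝ) + y * Complex.I : ℂ)) (by fun_prop)
  have hbound_int : Integrable fun y => K * (t ^ η * Q y) := (hQ_int.const_mul _).const_mul _
  have hinv := abs_le_integral_norm_laplace (hu_int.mono (by linarith)) ht
    (continuousAt_id.mul ((continuousOn_mlKernel hα a τ).continuousAt (Ioi_mem_nhds ht)))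
    (hbound_int.mono' hL_cont.aestronglyMeasurable hL_bound)
  rw [one_div_mul_cancel ht.ne', abs_mul, abs_of_pos ht] at hinv
  have hle : t * |mlKernel α a τ t| ≤ Real.exp 1 / (2 * Real.pi) * (K * (t ^ η * ∫ y, Q y)) := by
    rw [← integral_const_mul, ← integral_const_mul]
    exact hinv.trans (mul_le_mul_of_nonneg_left (integral_mono_of_nonneg
      (.of_forall fun y => norm_nonneg _) hbound_int hL_bound) (by positivity))
  rw [Real.rpow_sub_one ht.ne', mul_div_assoc', le_div_iff₀ ht]
  linarith

lemma exists_abs_mlKernel_le_rpow (hα : 0 < α) (hα2 : α < 2) (ha : 0 < a) (hτ : α / 2 ≤ τ)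
    (hη : 0 ≤ η) (hητ : τ - α < η) :
    ∃ C, ∀ t, 1 ≤ t → |mlKernel α a τ t| ≤ C * t ^ (η - 1) := by
  obtain ⟨ζ, hζ, hζ'⟩ : ∃ ζ, max 0 (τ - α) < ζ ∧ ζ < min τ (1 + τ - α) :=
    exists_between (max_lt (lt_min (by linarith) (by linarith))
      (lt_min (by linarith) (by linarith)))
  obtain ⟨hζ0, hζτ⟩ := max_lt_iff.1 hζ
  obtain ⟨hζτ', hζ1⟩ := lt_min_iff.1 hζ'
  obtain ⟨C, hC⟩ := exists_abs_mlKernel_le_rpow_of_lt hα hα2 ha hτ (η := min η ζ)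
    (le_min hη hζ0.le) (lt_min hητ hζτ) ((min_le_right _ _).trans hζ1.le)
    ((min_le_right _ _).trans_lt hζτ')
  have hC0 : 0 ≤ C := by simpa using (abs_nonneg _).trans (hC 1 one_pos)
  refine ⟨C, fun t ht => (hC t (by linarith)).trans ?_⟩
  gcongr
  exact min_le_left _ _

end MittagLefflerDecay

/-! ### Convolution on the half-line -/

section Convolution

open scoped Convolution

local notation "vol₊" => Measure.restrict (volume : Measure ℝ) (Set.Ioi 0)

variable {f f' g g' k : ℝ → ℝ} {T t : ℝ}

lemma locallyIntegrableOn_Ici_iff :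
    LocallyIntegrableOn f (Set.Ici 0) ↔ ∀ T > (0 : ℝ), IntervalIntegrable f volume 0 T := by
  refine ⟨fun hf T hT => ?_, fun hf => ?_⟩
  · rw [intervalIntegrable_iff_integrableOn_Icc_of_le (le_of_lt hT)]
    exact hf.integrableOn_compact_subset Set.Icc_subset_Ici_self isCompact_Icc
  · rw [locallyIntegrableOn_iff isClosed_Ici.isLocallyClosed]
    intro K hK hKc
    obtain ⟨T, hT⟩ := hKc.bddAbove
    have hmax : 0 < max T 1 := by positivity
    exact ((intervalIntegrable_iff_integrableOn_Icc_of_le hmax.le).1 (hf _ hmax)).mono_set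
      fun t ht => ⟨hK ht, (hT ht).trans (le_max_left _ _)⟩

lemma ae_restrict_Ioi_of_forall_Ioc {p : ℝ → Prop}
    (h : ∀ T > (0 : ℝ), ∀ᵐ t ∂volume.restrict (Set.Ioc 0 T), p t) : ∀ᵐ t ∂vol₊, p t := by
  have hcover : Set.Ioi (0 : ℝ) ⊆ ⋃ n : ℕ, Set.Ioc 0 ((n : ℝ) + 1) := fun t ht =>
    have ⟨n, hn⟩ := exists_nat_ge t
    Set.mem_iUnion.2 ⟨n, ht, hn.trans (by linarith)⟩
  refine ae_restrict_of_ae_restrict_of_subset hcover ?_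
  rw [ae_restrict_iUnion_iff]
  exact fun n => h _ (by positivity)

lemma causalConv_comm (f g : ℝ → ℝ) : causalConv f g = causalConv g f := by
  ext t
  have hsub :=
    intervalIntegral.integral_comp_sub_left (fun s => f (t - s) * g s) t (a := 0) (b := t)
  simp only [sub_self, sub_zero, sub_sub_cancel] at hsub
  rw [causalConv, causalConv, ← hsub]
  simp only [mul_comm]

lemma eqOn_convolution {F G : ℝ → ℝ} (hT : 0 ≤ T)
    (hF : Set.EqOn F ((Set.Ioi 0).indicator f) (Set.Iic T))
    (hG : Set.EqOn G ((Set.Ioi 0).indicator g) (Set.Iic T)) :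
    Set.EqOn (F ⋆[ContinuousLinearMap.mul ℝ ℝ] G) ((Set.Ioi 0).indicator (causalConv f g))
      (Set.Iic T) := by
  intro t ht
  have hpos := posConvolution_eq_convolution_indicator f g (ContinuousLinearMap.mul ℝ ℝ) volume
  simp only [posConvolution, ContinuousLinearMap.mul_apply', mul_comm (f _)] at hpos
  rw [causalConv_comm]
  refine Eq.trans (integral_congr_ae (ae_of_all _ fun s => ?_)) (congr_fun hpos t).symm
  rw [Set.mem_Iic] at ht
  simp only [ContinuousLinearMap.mul_apply']
  rcases le_or_gt s 0 with hs | hs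
  · rw [hF (hs.trans hT), Set.indicator_of_notMem (Set.notMem_Ioi.2 hs), zero_mul, zero_mul]
  rw [hG (Set.mem_Iic.2 (by linarith))]
  rcases le_or_gt s T with hsT | hsT
  · rw [hF hsT]
  · rw [Set.indicator_of_notMem (Set.notMem_Ioi.2 (by linarith)), mul_zero, mul_zero]

lemma exists_integrable_eqOn (hf : LocallyIntegrableOn f (Set.Ici 0)) (hT : 0 < T) :
    ∃ F, Integrable F ∧ Set.EqOn F ((Set.Ioi 0).indicator f) (Set.Iic T) := by
  refine ⟨(Set.Ioc 0 T).indicator f, ?_, fun t ht => ?_⟩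
  · exact ((locallyIntegrableOn_Ici_iff.1 hf T hT).1).integrable_indicator measurableSet_Ioc
  · simp [Set.indicator_apply, Set.mem_Iic.1 ht]

lemma locallyIntegrableOn_causalConv (hf : LocallyIntegrableOn f (Set.Ici 0))
    (hg : LocallyIntegrableOn g (Set.Ici 0)) :
    LocallyIntegrableOn (causalConv f g) (Set.Ici 0) := by
  refine locallyIntegrableOn_Ici_iff.2 fun T (hT : 0 < T) => ?_
  obtain ⟨F, hFi, hF⟩ := exists_integrable_eqOn hf hT
  obtain ⟨G, hGi, hG⟩ := exists_integrable_eqOn hg hT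
  rw [intervalIntegrable_iff_integrableOn_Ioc_of_le (le_of_lt hT)]
  refine (hFi.integrable_convolution (ContinuousLinearMap.mul ℝ ℝ) hGi).integrableOn.congr_fun
    (fun t ht => ?_) measurableSet_Ioc
  rw [eqOn_convolution hT.le hF hG ht.2, Set.indicator_of_mem (Set.mem_Ioi.2 ht.1)]

lemma causalConv_assoc (hf : LocallyIntegrableOn f (Set.Ici 0))
    (hg : LocallyIntegrableOn g (Set.Ici 0)) (hk : LocallyIntegrableOn k (Set.Ici 0)) :
    causalConv (causalConv f g) k =ᵐ[vol₊] causalConv f (causalConv g k) := by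
  refine ae_restrict_Ioi_of_forall_Ioc fun T (hT : 0 < T) => ?_
  obtain ⟨F, hFi, hF⟩ := exists_integrable_eqOn hf hT
  obtain ⟨G, hGi, hG⟩ := exists_integrable_eqOn hg hT
  obtain ⟨K, hKi, hK⟩ := exists_integrable_eqOn hk hT
  set L := ContinuousLinearMap.mul ℝ ℝ
  have hexists := hFi.norm.ae_convolution_exists L (hGi.norm.integrable_convolution L hKi.norm)
  filter_upwards [ae_restrict_of_ae hexists, ae_restrict_mem measurableSet_Ioc] with t hFGK ht
  have hassoc := convolution_assoc L L L L mul_assoc hFi.1 hGi.1 hKi.1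
    (hFi.ae_convolution_exists L hGi) (hGi.norm.ae_convolution_exists L hKi.norm) hFGK
  rwa [eqOn_convolution hT.le (eqOn_convolution hT.le hF hG) hK ht.2,
    eqOn_convolution hT.le hF (eqOn_convolution hT.le hG hK) ht.2,
    Set.indicator_of_mem (Set.mem_Ioi.2 ht.1), Set.indicator_of_mem (Set.mem_Ioi.2 ht.1)] at hassoc

lemma ae_intervalIntegrable_causalConv (hf : LocallyIntegrableOn f (Set.Ici 0))
    (hg : LocallyIntegrableOn g (Set.Ici 0)) :
    ∀ᵐ t ∂vol₊, IntervalIntegrable (fun s => f (t - s) * g s) volume 0 t := by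
  refine ae_restrict_Ioi_of_forall_Ioc fun T (hT : 0 < T) => ?_
  obtain ⟨F, hFi, hF⟩ := exists_integrable_eqOn hf hT
  obtain ⟨G, hGi, hG⟩ := exists_integrable_eqOn hg hT
  filter_upwards [ae_restrict_of_ae (hGi.ae_convolution_exists (ContinuousLinearMap.mul ℝ ℝ) hFi),
    ae_restrict_mem measurableSet_Ioc] with t hGF ht
  rw [intervalIntegrable_iff_integrableOn_Ioo_of_le ht.1.le]
  refine IntegrableOn.congr_fun (Integrable.integrableOn hGF) (fun s hs => ?_) measurableSet_Ioo
  simp only [ContinuousLinearMap.mul_apply']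
  rw [hF (Set.mem_Iic.2 (by linarith [hs.1, ht.2])), hG (Set.mem_Iic.2 (hs.2.le.trans ht.2)),
    Set.indicator_of_mem (Set.mem_Ioi.2 hs.1),
    Set.indicator_of_mem (Set.mem_Ioi.2 (sub_pos.2 hs.2)), mul_comm]

lemma causalConv_congr (hf : f =ᵐ[vol₊] f') (hg : g =ᵐ[vol₊] g') :
    causalConv f g =ᵐ[vol₊] causalConv f' g' := by
  have hright {u v v' : ℝ → ℝ} (hv : v =ᵐ[vol₊] v') (t : ℝ) (ht : 0 < t) :
      causalConv u v t = causalConv u v' t := by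
    rw [EventuallyEq, ae_restrict_iff' measurableSet_Ioi] at hv
    refine intervalIntegral.integral_congr_ae (hv.mono fun s hs hst => ?_)
    rw [Set.uIoc_of_le ht.le] at hst
    rw [hs hst.1]
  filter_upwards [ae_restrict_mem measurableSet_Ioi] with t ht
  rw [hright hg t ht, causalConv_comm, hright hf t ht, causalConv_comm]

lemma causalConv_smul (c : ℝ) (f g : ℝ → ℝ) : causalConv f (c • g) = c • causalConv f g := by
  ext t
  simp only [causalConv, Pi.smul_apply, smul_eq_mul, mul_left_comm _ c]
  exact intervalIntegral.integral_const_mul _ _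

lemma causalConv_add (hf : LocallyIntegrableOn f (Set.Ici 0))
    (hg : LocallyIntegrableOn g (Set.Ici 0)) (hk : LocallyIntegrableOn k (Set.Ici 0)) :
    causalConv f (g + k) =ᵐ[vol₊] causalConv f g + causalConv f k := by
  filter_upwards [ae_intervalIntegrable_causalConv hf hg,
    ae_intervalIntegrable_causalConv hf hk] with t hfg hfk
  simp only [causalConv, Pi.add_apply, mul_add]
  exact intervalIntegral.integral_add hfg hfk

lemma causalConv_sub (hf : LocallyIntegrableOn f (Set.Ici 0))
    (hg : LocallyIntegrableOn g (Set.Ici 0)) (hk : LocallyIntegrableOn k (Set.Ici 0)) :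
    causalConv f (g - k) =ᵐ[vol₊] causalConv f g - causalConv f k := by
  filter_upwards [ae_intervalIntegrable_causalConv hf hg,
    ae_intervalIntegrable_causalConv hf hk] with t hfg hfk
  simp only [causalConv, Pi.sub_apply, mul_sub]
  exact intervalIntegral.integral_sub hfg hfk

/-! ### Variation of constants -/

variable {α a τ : ℝ}

lemma locallyIntegrableOn_rlKernel (hτ : 0 < τ) :
    LocallyIntegrableOn (rlKernel τ) (Set.Ici 0) :=
  locallyIntegrableOn_Ici_iff.2 fun T _ => intervalIntegrable_rlKernel hτ 0 T

lemma locallyIntegrableOn_mlKernel (hα : 0 < α) (a : ℝ) (hτ : 0 < τ) :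
    LocallyIntegrableOn (mlKernel α a τ) (Set.Ici 0) :=
  locallyIntegrableOn_Ici_iff.2 fun T _ => intervalIntegrable_mlKernel hα a hτ 0 T

lemma rlKernel_ae_eq_mlKernel_add (hα : 0 < α) (a τ : ℝ) :
    rlKernel τ =ᵐ[vol₊] mlKernel α a τ + a • mlKernel α a (τ + α) := by
  filter_upwards [ae_restrict_mem measurableSet_Ioi] with t ht
  rw [Pi.add_apply, Pi.smul_apply, smul_eq_mul, mlKernel_eq_rlKernel_sub hα a τ ht, sub_add_cancel]

lemma causalConv_rlKernel_causalConv_rlKernel {σ : ℝ} (hσ : 0 < σ) (hτ : 0 < τ)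
    (hf : LocallyIntegrableOn f (Set.Ici 0)) :
    causalConv (rlKernel σ) (causalConv (rlKernel τ) f)
      =ᵐ[vol₊] causalConv (rlKernel (σ + τ)) f := by
  refine (causalConv_assoc (locallyIntegrableOn_rlKernel hσ) (locallyIntegrableOn_rlKernel hτ)
    hf).symm.trans (causalConv_congr ?_ .rfl)
  filter_upwards [ae_restrict_mem measurableSet_Ioi] with t ht using causalConv_rlKernel hσ hτ ht

lemma causalConv_mlKernel_rlKernel (hα : 0 < α) (a : ℝ) {σ : ℝ} (hσ : 0 < σ) (hτ : 0 < τ) :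
    causalConv (mlKernel α a τ) (rlKernel σ) =ᵐ[vol₊] mlKernel α a (σ + τ) := by
  rw [causalConv_comm]
  filter_upwards [ae_restrict_mem measurableSet_Ioi] with t ht
    using causalConv_rlKernel_mlKernel hα a hσ hτ ht

lemma causalConv_mlKernel_causalConv_rlKernel (hα : 0 < α) (a : ℝ) {σ : ℝ} (hσ : 0 < σ)
    (hτ : 0 < τ) (hf : LocallyIntegrableOn f (Set.Ici 0)) :
    causalConv (mlKernel α a τ) (causalConv (rlKernel σ) f)
      =ᵐ[vol₊] causalConv (mlKernel α a (σ + τ)) f :=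
  (causalConv_assoc (locallyIntegrableOn_mlKernel hα a hτ) (locallyIntegrableOn_rlKernel hσ)
    hf).symm.trans (causalConv_congr (causalConv_mlKernel_rlKernel hα a hσ hτ) .rfl)

lemma causalConv_rlKernel_ae_eq_mlKernel_add (hα : 0 < α) (a : ℝ) (hτ : 0 < τ)
    (hf : LocallyIntegrableOn f (Set.Ici 0)) :
    causalConv (rlKernel τ) f
      =ᵐ[vol₊] causalConv (mlKernel α a τ) f + a • causalConv (mlKernel α a (τ + α)) f := by
  have hadd := causalConv_add hf (locallyIntegrableOn_mlKernel hα a hτ)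
    ((locallyIntegrableOn_mlKernel hα a (add_pos hτ hα)).smul a)
  rw [causalConv_smul, causalConv_comm f, causalConv_comm f, causalConv_comm f] at hadd
  exact (causalConv_congr (rlKernel_ae_eq_mlKernel_add hα a τ) .rfl).trans hadd

lemma ae_eq_zero_of_ae_integral_eq_zero (hf : LocallyIntegrableOn f (Set.Ici 0))
    (h : ∀ᵐ t ∂vol₊, ∫ s in (0 : ℝ)..t, f s = 0) : f =ᵐ[vol₊] 0 := by
  have hint := locallyIntegrableOn_Ici_iff.1 hf
  have hcont : ContinuousOn (fun t => ∫ s in (0 : ℝ)..t, f s) (Set.Ioi 0) := fun t ht => by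
    have ht1 : 0 < t + 1 := by linarith [Set.mem_Ioi.1 ht]
    refine ContinuousAt.continuousWithinAt (ContinuousOn.continuousAt
      (intervalIntegral.continuousOn_primitive_interval
        ((intervalIntegrable_iff' (by simp)).1 (hint _ ht1))) ?_)
    rw [Set.uIcc_of_le ht1.le]
    exact Icc_mem_nhds ht (lt_add_one t)
  have hzero : Set.EqOn (fun t => ∫ s in (0 : ℝ)..t, f s) (fun _ => 0) (Set.Ioi 0) :=
    Measure.eqOn_open_of_ae_eq h isOpen_Ioi hcont continuousOn_const
  refine ae_restrict_Ioi_of_forall_Ioc fun T hT => ?_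
  rw [ae_restrict_iff' measurableSet_Ioc]
  filter_upwards [(hint T hT).ae_hasDerivAt_integral] with t hderiv ht
  rw [Set.uIcc_of_le (le_of_lt hT)] at hderiv
  exact (hderiv ⟨ht.1.le, ht.2⟩ 0 ⟨le_rfl, le_of_lt hT⟩).unique
    ((hasDerivAt_const t 0).congr_of_eventuallyEq (hzero.eventuallyEq_of_mem (Ioi_mem_nhds ht.1)))

lemma causalConv_rlKernel_one (f : ℝ → ℝ) (t : ℝ) :
    causalConv (rlKernel 1) f t = ∫ s in (0 : ℝ)..t, f s := by
  simp [causalConv, rlKernel]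

lemma ae_eq_of_causalConv_rlKernel_ae_eq (hτ : 0 < τ) (hτ1 : τ < 1)
    (hf : LocallyIntegrableOn f (Set.Ici 0)) (hg : LocallyIntegrableOn g (Set.Ici 0))
    (h : causalConv (rlKernel τ) f =ᵐ[vol₊] causalConv (rlKernel τ) g) : f =ᵐ[vol₊] g := by
  have hτ' : 0 < 1 - τ := sub_pos.2 hτ1
  have hprim := (causalConv_rlKernel_causalConv_rlKernel hτ' hτ hf).symm.trans
    ((causalConv_congr .rfl h).trans (causalConv_rlKernel_causalConv_rlKernel hτ' hτ hg))
  rw [sub_add_cancel] at hprim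
  refine (sub_ae_eq_zero f g).1 ?_
  refine ae_eq_zero_of_ae_integral_eq_zero (hf.sub hg) ?_
  filter_upwards [hprim, causalConv_sub (locallyIntegrableOn_rlKernel one_pos) hf hg]
    with t hfg hsub
  rw [← causalConv_rlKernel_one, hsub, Pi.sub_apply, hfg, sub_self]

lemma ae_eq_sub_of_add_smul_causalConv_ae_eq (hα : 0 < α) (hf : LocallyIntegrableOn f (Set.Ici 0))
    (h : f + a • causalConv (rlKernel α) f =ᵐ[vol₊] g) :
    f =ᵐ[vol₊] g - a • causalConv (mlKernel α a α) g := by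
  have hres : causalConv (mlKernel α a α) g =ᵐ[vol₊] causalConv (rlKernel α) f := by
    have hadd := causalConv_add (locallyIntegrableOn_mlKernel hα a hα) hf
      ((locallyIntegrableOn_causalConv (locallyIntegrableOn_rlKernel hα) hf).smul a)
    rw [causalConv_smul] at hadd
    filter_upwards [causalConv_congr (f := mlKernel α a α) .rfl h, hadd,
      causalConv_mlKernel_causalConv_rlKernel hα a hα hα hf,
      causalConv_rlKernel_ae_eq_mlKernel_add hα a hα hf] with t hg hadd hassoc hrec
    rw [← hg, hadd, hrec, Pi.add_apply, Pi.smul_apply, hassoc, Pi.add_apply, Pi.smul_apply]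
  filter_upwards [h, hres] with t hg hres
  rw [Pi.sub_apply, ← hg, Pi.smul_apply, hres, Pi.add_apply, Pi.smul_apply, add_sub_cancel_right]

lemma ae_add_smul_causalConv_eq_rlKernel_add {γ w₀ w₁ : ℝ} {q w : ℝ → ℝ} (hα : 1 < α)
    (hα2 : α < 2) (hγ : 0 < γ) (hf : LocallyIntegrableOn f (Set.Ici 0))
    (hw : LocallyIntegrableOn w (Set.Ici 0)) (hq : LocallyIntegrableOn q (Set.Ici 0))
    (hqw : causalConv (rlKernel (2 - α)) (w - (w₀ • rlKernel 1 + w₁ • rlKernel 2))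
      =ᵐ[vol₊] causalConv (rlKernel 2) q)
    (hqf : q + a • w =ᵐ[vol₊] causalConv (rlKernel γ) f) :
    w + a • causalConv (rlKernel α) w
      =ᵐ[vol₊] w₀ • rlKernel 1 + w₁ • rlKernel 2 + causalConv (rlKernel (α + γ)) f := by
  have hα0 : 0 < α := by linarith
  have hkα := locallyIntegrableOn_rlKernel hα0
  have hinv : w - (w₀ • rlKernel 1 + w₁ • rlKernel 2) =ᵐ[vol₊] causalConv (rlKernel α) q := by
    refine ae_eq_of_causalConv_rlKernel_ae_eq (τ := 2 - α) (by linarith) (by linarith)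
      (hw.sub (((locallyIntegrableOn_rlKernel one_pos).smul w₀).add
        ((locallyIntegrableOn_rlKernel two_pos).smul w₁)))
      (locallyIntegrableOn_causalConv hkα hq) (hqw.trans ?_)
    simpa only [sub_add_cancel] using
      (causalConv_rlKernel_causalConv_rlKernel (sub_pos.2 hα2) hα0 hq).symm
  have hadd := causalConv_add hkα hq (hw.smul a)
  rw [causalConv_smul] at hadd
  filter_upwards [hinv, hadd, causalConv_congr (f := rlKernel α) .rfl hqf,
    causalConv_rlKernel_causalConv_rlKernel hα0 hγ hf] with t hinv hadd hqf hassoc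
  simp only [Pi.add_apply, Pi.sub_apply] at hinv hadd ⊢
  rw [← hassoc, ← hqf, hadd, ← hinv]
  ring

lemma ae_eq_mlKernel_add_causalConv {σ w₀ w₁ : ℝ} {w : ℝ → ℝ} (hα : 0 < α) (hσ : 0 < σ)
    (hf : LocallyIntegrableOn f (Set.Ici 0)) (hw : LocallyIntegrableOn w (Set.Ici 0))
    (h : w + a • causalConv (rlKernel α) w
      =ᵐ[vol₊] w₀ • rlKernel 1 + w₁ • rlKernel 2 + causalConv (rlKernel σ) f) :
    w =ᵐ[vol₊] w₀ • mlKernel α a 1 + w₁ • mlKernel α a 2 + causalConv (mlKernel α a σ) f := by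
  have heα := locallyIntegrableOn_mlKernel hα a hα
  have h1 := (locallyIntegrableOn_rlKernel one_pos).smul w₀
  have h2 := (locallyIntegrableOn_rlKernel two_pos).smul w₁
  have hadd₁ := causalConv_add heα h1 h2
  have hadd₂ := causalConv_add heα (h1.add h2)
    (locallyIntegrableOn_causalConv (locallyIntegrableOn_rlKernel hσ) hf)
  rw [causalConv_smul, causalConv_smul] at hadd₁
  filter_upwards [ae_eq_sub_of_add_smul_causalConv_ae_eq hα hw h, hadd₁, hadd₂,
    causalConv_mlKernel_rlKernel hα a one_pos hα, causalConv_mlKernel_rlKernel hα a two_pos hα,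
    causalConv_mlKernel_causalConv_rlKernel hα a hσ hα hf, rlKernel_ae_eq_mlKernel_add hα a 1,
    rlKernel_ae_eq_mlKernel_add hα a 2, causalConv_rlKernel_ae_eq_mlKernel_add hα a hσ hf]
    with t hw hadd₁ hadd₂ he₁ he₂ hef hr₁ hr₂ hrf
  simp only [Pi.add_apply, Pi.sub_apply, Pi.smul_apply, smul_eq_mul] at *
  rw [hw, hadd₂, hadd₁, he₁, he₂, hef, hr₁, hr₂, hrf]
  ring

end Convolution

/-! ### The Caputo derivative as a forcing term -/

section Caputo

open Asymptotics
open scoped Topology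

local notation "vol₊" => Measure.restrict (volume : Measure ℝ) (Set.Ioi 0)

variable {α σ τ : ℝ} {v w g : ℝ → ℝ}

lemma capKernel_eq_causalConv (hα2 : α < 2) (w : ℝ → ℝ) :
    capKernel α w =
      causalConv (rlKernel (2 - α)) (w - (w 0 • rlKernel 1 + deriv w 0 • rlKernel 2)) := by
  ext t
  rw [capKernel, if_neg hα2.ne, rlInt_eq_causalConv]
  congr 1
  ext s
  norm_num [rlKernel]
  ring

lemma isBigO_causalConv_rlKernel (hσ : 0 < σ) (hτ : 0 < τ) (hv : v =O[𝓝[>] 0] rlKernel τ) :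
    causalConv (rlKernel σ) v =O[𝓝[>] 0] rlKernel (σ + τ) := by
  obtain ⟨C, hC⟩ := hv.bound
  obtain ⟨δ, hδ, hvδ⟩ := mem_nhdsGT_iff_exists_Ioo_subset.1 hC
  refine IsBigO.of_bound C ?_
  filter_upwards [Ioo_mem_nhdsGT hδ] with t ht
  rw [Real.norm_of_nonneg (rlKernel_nonneg (add_pos hσ hτ) ht.1.le),
    ← causalConv_rlKernel hσ hτ ht.1, causalConv, causalConv, ← intervalIntegral.integral_const_mul]
  refine intervalIntegral.norm_integral_le_of_norm_le ht.1.le (ae_of_all _ fun s hs => ?_)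
    ((intervalIntegrable_rlKernel_mul_rlKernel hσ hτ ht.1).const_mul C)
  have hσs := rlKernel_nonneg hσ (sub_nonneg.2 hs.2)
  rw [norm_mul, Real.norm_of_nonneg hσs, mul_left_comm]
  refine mul_le_mul_of_nonneg_left ((hvδ ⟨hs.1, hs.2.trans_lt ht.2⟩).trans_eq ?_) hσs
  rw [Real.norm_of_nonneg (rlKernel_nonneg hτ hs.1.le)]

lemma rlKernel_isLittleO_id (hτ : 2 < τ) : rlKernel τ =o[𝓝[>] 0] id := by
  have hzero : Tendsto (fun t : ℝ => t ^ (τ - 2) / Real.Gamma τ) (𝓝[>] 0) (𝓝 0) := by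
    have hcont := ((Real.continuous_rpow_const (sub_nonneg.2 hτ.le)).div_const
      (Real.Gamma τ)).tendsto 0
    rw [Real.zero_rpow (sub_pos.2 hτ).ne', zero_div] at hcont
    exact hcont.mono_left nhdsWithin_le_nhds
  have hmul := (isLittleO_one_iff ℝ).2 hzero |>.mul_isBigO (isBigO_refl id (𝓝[>] 0))
  refine hmul.congr' ?_ (Eventually.of_forall fun t => one_mul _)
  filter_upwards [self_mem_nhdsWithin] with t ht
  rw [rlKernel, show τ - 1 = τ - 2 + 1 by ring, Real.rpow_add_one (ne_of_gt ht), id]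
  ring

lemma deriv_capKernel_zero (hα2 : α < 2) (hw : DifferentiableAt ℝ w 0)
    (hd : DifferentiableAt ℝ (capKernel α w) 0) : deriv (capKernel α w) 0 = 0 := by
  have hv : (w - (w 0 • rlKernel 1 + deriv w 0 • rlKernel 2)) =O[𝓝[>] 0] rlKernel 2 := by
    refine ((hasDerivAt_iff_isLittleO.1 hw.hasDerivAt).isBigO.mono nhdsWithin_le_nhds).congr
      (fun t => ?_) (fun t => ?_)
    · norm_num [rlKernel]
      ring
    · norm_num [rlKernel]
  have hzero : HasDerivWithinAt (capKernel α w) 0 (Set.Ioi 0) 0 := by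
    rw [hasDerivWithinAt_iff_isLittleO, capKernel_eq_causalConv hα2]
    refine ((isBigO_causalConv_rlKernel (sub_pos.2 hα2) two_pos hv).trans_isLittleO
      (rlKernel_isLittleO_id (by linarith))).congr (fun t => ?_) fun t => (sub_zero t).symm
    simp [causalConv]
  exact (uniqueDiffWithinAt_Ioi 0).eq_deriv _ hd.hasDerivAt.hasDerivWithinAt hzero

lemma ae_eq_causalConv_rlKernel_two (hg : ∀ T > (0 : ℝ), AC2On g T) (h0 : g 0 = 0)
    (h0' : deriv g 0 = 0) : g =ᵐ[vol₊] causalConv (rlKernel 2) (deriv (deriv g)) := by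
  have hg'' : LocallyIntegrableOn (deriv (deriv g)) (Set.Ici 0) :=
    locallyIntegrableOn_Ici_iff.2 fun T hT => (hg T hT).2.1
  have hk := locallyIntegrableOn_rlKernel one_pos
  have hassoc := causalConv_rlKernel_causalConv_rlKernel one_pos one_pos hg''
  rw [one_add_one_eq_two] at hassoc
  filter_upwards [hassoc, ae_restrict_mem measurableSet_Ioi] with t hassoc ht
  obtain ⟨hdiff, -, hderiv⟩ := hg t ht
  have hprim : ∀ s ∈ Set.uIcc 0 t,
      HasDerivAt g (causalConv (rlKernel 1) (deriv (deriv g)) s) s := fun s hs => by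
    rw [Set.uIcc_of_le (le_of_lt ht)] at hs
    have hderiv := hderiv s hs
    rw [h0', zero_add, ← causalConv_rlKernel_one] at hderiv
    rw [← hderiv]
    exact (hdiff s hs).hasDerivAt
  rw [← hassoc, causalConv_rlKernel_one, intervalIntegral.integral_eq_sub_of_hasDerivAt hprim
    (locallyIntegrableOn_Ici_iff.1 (locallyIntegrableOn_causalConv hk hg'') t ht), h0, sub_zero]

lemma capKernel_ae_eq_causalConv_caputoD (hα2 : α < 2) (hw : DifferentiableAt ℝ w 0)
    (hAC : ∀ T > (0 : ℝ), AC2On (capKernel α w) T) :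
    capKernel α w =ᵐ[vol₊] causalConv (rlKernel 2) (caputoD α w) := by
  refine ae_eq_causalConv_rlKernel_two hAC ?_ (deriv_capKernel_zero hα2 hw ?_)
  · rw [capKernel_eq_causalConv hα2, causalConv, intervalIntegral.integral_same]
  · exact (hAC 1 one_pos).1 0 ⟨le_rfl, zero_le_one⟩

end Caputo

/-! ### Growth of the solution -/

section Growth

open scoped Topology

variable {α a γ τ c L R t : ℝ} {f g K : ℝ → ℝ}

lemma tendsto_rpow_mul_mlKernel (hα : 0 < α) (hα2 : α < 2) (ha : 0 < a) (hτ : α / 2 ≤ τ)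
    (hγ : 0 < γ) (hτγ : τ - α < γ) :
    Tendsto (fun t => t ^ (1 - γ) * mlKernel α a τ t) atTop (𝓝 0) := by
  obtain ⟨η, hη, hηγ⟩ := exists_between (max_lt hγ hτγ)
  obtain ⟨C, hC⟩ := exists_abs_mlKernel_le_rpow hα hα2 ha hτ ((le_max_left _ _).trans hη.le)
    ((le_max_right _ _).trans_lt hη)
  have hlim : Tendsto (fun t : ℝ => C * t ^ (-(γ - η))) atTop (𝓝 0) := by
    simpa only [mul_zero] using (tendsto_rpow_neg_atTop (sub_pos.2 hηγ)).const_mul C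
  refine squeeze_zero_norm' ?_ hlim
  filter_upwards [eventually_ge_atTop 1] with t ht
  have ht0 : 0 < t := zero_lt_one.trans_le ht
  calc ‖t ^ (1 - γ) * mlKernel α a τ t‖ = t ^ (1 - γ) * |mlKernel α a τ t| := by
        rw [norm_mul, Real.norm_of_nonneg (Real.rpow_nonneg ht0.le _), Real.norm_eq_abs]
    _ ≤ t ^ (1 - γ) * (C * t ^ (η - 1)) := by gcongr; exact hC t ht
    _ = C * t ^ (-(γ - η)) := by
      rw [mul_left_comm, ← Real.rpow_add ht0]
      ring_nf

lemma tendsto_rpow_mul_mlKernel_add (hα : 0 < α) (hα2 : α < 2) (ha : 0 < a) (hγ : α / 2 ≤ γ) :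
    Tendsto (fun t => t ^ (1 - γ) * mlKernel α a (γ + α) t) atTop (𝓝 (a * Real.Gamma γ)⁻¹) := by
  have hγ0 : 0 < γ := by linarith
  have hlim := ((tendsto_const_nhds (x := (Real.Gamma γ)⁻¹)).sub
    (tendsto_rpow_mul_mlKernel hα hα2 ha hγ hγ0 (by linarith))).const_mul a⁻¹
  rw [sub_zero, ← mul_inv] at hlim
  refine hlim.congr' ?_
  filter_upwards [eventually_gt_atTop 0] with t ht
  have hrl : t ^ (1 - γ) * rlKernel γ t = (Real.Gamma γ)⁻¹ := by
    rw [rlKernel, ← mul_div_assoc, ← Real.rpow_add ht, sub_add_sub_cancel', sub_self,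
      Real.rpow_zero, one_div]
  rw [← hrl, mlKernel_eq_rlKernel_sub hα a γ ht]
  field_simp
  ring

lemma min_one_two_rpow_mul_le {x : ℝ} (β : ℝ) (hx : 0 < x) (hxt : x ≤ t) (htx : t ≤ 2 * x) :
    min 1 (2 ^ β) * x ^ β ≤ t ^ β := by
  rcases le_total 0 β with hβ | hβ
  · calc min 1 (2 ^ β) * x ^ β ≤ 1 * x ^ β := by gcongr; exact min_le_left _ _
      _ ≤ t ^ β := by rw [one_mul]; gcongr
  · calc min 1 (2 ^ β) * x ^ β ≤ 2 ^ β * x ^ β := by gcongr; exact min_le_right _ _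
      _ = (2 * x) ^ β := (Real.mul_rpow zero_le_two hx.le).symm
      _ ≤ t ^ β := Real.rpow_le_rpow_of_nonpos (hx.trans_le hxt) htx hβ

lemma exists_eventually_forall_le_rpow_mul_sub (hL : 0 < L)
    (hK : Tendsto (fun t => t ^ (1 - γ) * K t) atTop (𝓝 L)) (R : ℝ) :
    ∃ c > 0, ∀ᶠ t in atTop, ∀ s ∈ Set.Ioc 0 R, c ≤ t ^ (1 - γ) * K (t - s) := by
  obtain ⟨T, hT⟩ := eventually_atTop.1 (hK.eventually_const_le (half_lt_self hL))
  refine ⟨min 1 (2 ^ (1 - γ)) * (L / 2), by positivity, ?_⟩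
  filter_upwards [eventually_ge_atTop (T + R), eventually_ge_atTop (2 * R)] with t htT htR s hs
  have hts : 0 < t - s := by linarith [hs.1, hs.2]
  have hKs := hT (t - s) (by linarith [hs.2])
  have hK0 : 0 ≤ K (t - s) :=
    (pos_of_mul_pos_right ((half_pos hL).trans_le hKs) (Real.rpow_nonneg hts.le _)).le
  calc min 1 (2 ^ (1 - γ)) * (L / 2)
      ≤ min 1 (2 ^ (1 - γ)) * ((t - s) ^ (1 - γ) * K (t - s)) := by gcongr
    _ = min 1 (2 ^ (1 - γ)) * (t - s) ^ (1 - γ) * K (t - s) := (mul_assoc _ _ _).symm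
    _ ≤ t ^ (1 - γ) * K (t - s) := by
      gcongr
      exact min_one_two_rpow_mul_le _ hts (by linarith [hs.1]) (by linarith [hs.2])

lemma mul_integral_le_causalConv (hR : 0 < R) (hRt : R < t) (hf : IntervalIntegrable f volume 0 R)
    (hKf : IntervalIntegrable (fun s => K (t - s) * f s) volume 0 t)
    (hf0 : ∀ᵐ s ∂volume.restrict (Set.Ioi 0), 0 ≤ f s) (hK0 : ∀ s, 0 < s → 0 ≤ K s)
    (hK : ∀ s ∈ Set.Ioc 0 R, c ≤ K (t - s)) :
    c * ∫ s in (0 : ℝ)..R, f s ≤ causalConv K f t := by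
  have hsub : Set.Ioc 0 R ⊆ Set.Ioo 0 t := fun s hs => ⟨hs.1, hs.2.trans_lt hRt⟩
  rw [intervalIntegrable_iff_integrableOn_Ioo_of_le (hR.trans hRt).le] at hKf
  have hKf0 : ∀ᵐ s ∂volume.restrict (Set.Ioo 0 t), 0 ≤ K (t - s) * f s := by
    filter_upwards [ae_restrict_of_ae_restrict_of_subset Set.Ioo_subset_Ioi_self hf0,
      ae_restrict_mem measurableSet_Ioo] with s hs hst
    exact mul_nonneg (hK0 _ (sub_pos.2 hst.2)) hs
  calc c * ∫ s in (0 : ℝ)..R, f s = ∫ s in Set.Ioc 0 R, c * f s := by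
        rw [intervalIntegral.integral_of_le hR.le, integral_const_mul]
    _ ≤ ∫ s in Set.Ioc 0 R, K (t - s) * f s := by
      refine integral_mono_ae (hf.1.const_mul c) (hKf.mono_set hsub) ?_
      filter_upwards [ae_restrict_of_ae_restrict_of_subset Set.Ioc_subset_Ioi_self hf0,
        ae_restrict_mem measurableSet_Ioc] with s hs hsR
      exact mul_le_mul_of_nonneg_right (hK s hsR) hs
    _ ≤ ∫ s in Set.Ioo 0 t, K (t - s) * f s := setIntegral_mono_set hKf hKf0 hsub.eventuallyLE
    _ = causalConv K f t := by
      rw [causalConv, intervalIntegral.integral_of_le (hR.trans hRt).le,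
        integral_Ioc_eq_integral_Ioo]

lemma exists_integral_pos_of_not_ae_eq_zero (hf : LocallyIntegrableOn f (Set.Ici 0))
    (hf0 : ∀ᵐ s ∂volume.restrict (Set.Ioi 0), 0 ≤ f s)
    (hfne : ¬ f =ᵐ[volume.restrict (Set.Ioi 0)] 0) : ∃ R > 0, 0 < ∫ s in (0 : ℝ)..R, f s := by
  contrapose! hfne
  refine ae_eq_zero_of_ae_integral_eq_zero hf ?_
  filter_upwards [ae_restrict_mem measurableSet_Ioi] with t ht
  refine (hfne t ht).antisymm ?_
  rw [intervalIntegral.integral_of_le (le_of_lt ht)]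
  exact integral_nonneg_of_ae
    (ae_restrict_of_ae_restrict_of_subset Set.Ioc_subset_Ioi_self hf0)

lemma exists_ae_le_rpow_mul_causalConv_mlKernel (hα : 0 < α) (hα2 : α < 2) (ha : 0 < a)
    (hγ : α / 2 ≤ γ) (hf : LocallyIntegrableOn f (Set.Ici 0))
    (hf0 : ∀ᵐ s ∂volume.restrict (Set.Ioi 0), 0 ≤ f s)
    (hfne : ¬ f =ᵐ[volume.restrict (Set.Ioi 0)] 0) :
    ∃ c > 0, ∃ T > 0, ∀ᵐ t ∂volume.restrict (Set.Ioi T),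
      c ≤ t ^ (1 - γ) * causalConv (mlKernel α a (γ + α)) f t := by
  have hγ0 : 0 < γ := by linarith
  have hL : 0 < (a * Real.Gamma γ)⁻¹ := inv_pos.2 (mul_pos ha (Real.Gamma_pos_of_pos hγ0))
  obtain ⟨R, hR, hfR⟩ := exists_integral_pos_of_not_ae_eq_zero hf hf0 hfne
  obtain ⟨c, hc, hcK⟩ := exists_eventually_forall_le_rpow_mul_sub hL
    (tendsto_rpow_mul_mlKernel_add hα hα2 ha hγ) R
  obtain ⟨T, hT⟩ := eventually_atTop.1 hcK
  refine ⟨c * ∫ s in (0 : ℝ)..R, f s, mul_pos hc hfR, max T R, hR.trans_le (le_max_right _ _), ?_⟩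
  filter_upwards [ae_restrict_of_ae_restrict_of_subset
    (Set.Ioi_subset_Ioi (hR.le.trans (le_max_right T R)))
    (ae_intervalIntegrable_causalConv (locallyIntegrableOn_mlKernel hα a (add_pos hγ0 hα)) hf),
    ae_restrict_mem measurableSet_Ioi] with t hint ht
  obtain ⟨hTt, hRt⟩ := max_lt_iff.1 (Set.mem_Ioi.1 ht)
  have ht0 : 0 < t ^ (1 - γ) := Real.rpow_pos_of_pos (hR.trans hRt) _
  have hle := mul_integral_le_causalConv (c := c / t ^ (1 - γ)) hR hRt
    (locallyIntegrableOn_Ici_iff.1 hf R hR) hint hf0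
    (fun s hs => mlKernel_nonneg hα hα2.le ha (by linarith) hs)
    fun s hs => (div_le_iff₀' ht0).2 (hT t hTt.le s hs)
  rwa [div_mul_eq_mul_div, div_le_iff₀' ht0] at hle

lemma exists_ae_le_rpow_mul {w₀ w₁ : ℝ} {w : ℝ → ℝ} (hα : 1 < α) (hα2 : α < 2) (ha : 0 < a)
    (hγ : α / 2 ≤ γ) (hαγ : 2 < α + γ) (hf : LocallyIntegrableOn f (Set.Ici 0))
    (hf0 : ∀ᵐ s ∂volume.restrict (Set.Ioi 0), 0 ≤ f s)
    (hfne : ¬ f =ᵐ[volume.restrict (Set.Ioi 0)] 0)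
    (hw : w =ᵐ[volume.restrict (Set.Ioi 0)]
      w₀ • mlKernel α a 1 + w₁ • mlKernel α a 2 + causalConv (mlKernel α a (α + γ)) f) :
    ∃ c > 0, ∃ T > 0, ∀ᵐ t ∂volume.restrict (Set.Ioi T), c ≤ t ^ (1 - γ) * w t := by
  have hα0 : 0 < α := one_pos.trans hα
  have hγ0 : 0 < γ := by linarith
  obtain ⟨c, hc, T, hT, hcT⟩ :=
    exists_ae_le_rpow_mul_causalConv_mlKernel hα0 hα2 ha hγ hf hf0 hfne
  have hhom : Tendsto (fun t => w₀ * (t ^ (1 - γ) * mlKernel α a 1 t)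
      + w₁ * (t ^ (1 - γ) * mlKernel α a 2 t)) atTop (𝓝 (w₀ * 0 + w₁ * 0)) :=
    ((tendsto_rpow_mul_mlKernel hα0 hα2 ha (by linarith) hγ0 (by linarith)).const_mul w₀).add
      ((tendsto_rpow_mul_mlKernel hα0 hα2 ha (by linarith) hγ0 (by linarith)).const_mul w₁)
  obtain ⟨S, hS⟩ := eventually_atTop.1 (hhom.eventually_const_le
    (by linarith : -(c / 2) < w₀ * 0 + w₁ * 0))
  refine ⟨c / 2, half_pos hc, max S T, hT.trans_le (le_max_right _ _), ?_⟩
  filter_upwards [ae_restrict_of_ae_restrict_of_subset (Set.Ioi_subset_Ioi (le_max_right S T)) hcT,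
    ae_restrict_of_ae_restrict_of_subset
      (Set.Ioi_subset_Ioi (hT.le.trans (le_max_right S T))) hw,
    ae_restrict_mem measurableSet_Ioi] with t hct hwt ht
  have hSt := hS t ((le_max_left _ _).trans (le_of_lt ht))
  rw [add_comm γ α] at hct
  simp only [Pi.add_apply, Pi.smul_apply, smul_eq_mul] at hwt
  rw [hwt]
  linarith

lemma forall_le_of_ae_le {U : Set ℝ} (hU : IsOpen U) (hg : ContinuousOn g U)
    (h : ∀ᵐ t ∂volume.restrict U, c ≤ g t) : ∀ t ∈ U, c ≤ g t := by
  have heq : Set.EqOn (fun t => c ⊓ g t) (fun _ => c) U :=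
    Measure.eqOn_open_of_ae_eq (h.mono fun t ht => inf_eq_left.2 ht) hU
      (continuousOn_const.inf hg) continuousOn_const
  exact fun t ht => inf_eq_left.1 (heq ht)

lemma liminf_coe_ereal_pos_of_ae_le {T : ℝ} (hc : 0 < c) (hg : ContinuousOn g (Set.Ioi T))
    (h : ∀ᵐ t ∂volume.restrict (Set.Ioi T), c ≤ g t) :
    0 < liminf (fun t => (g t : EReal)) atTop := by
  refine (EReal.coe_pos.2 hc).trans_le (le_liminf_of_le (by isBoundedDefault) ?_)
  filter_upwards [eventually_gt_atTop T] with t ht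
  exact EReal.coe_le_coe_iff.2 (forall_le_of_ae_le isOpen_Ioi hg h t ht)

end Growth

theorem liminf_pos_iii_general {γ α a : ℝ} {f w : ℝ → ℝ} (hα1 : 1 < α) (hα2 : α < 2) (ha : 0 < a)
    (hf : ∀ T > (0 : ℝ), IntervalIntegrable f volume 0 T)
    (hf0 : ∀ᵐ t ∂volume.restrict (Set.Ici 0), 0 ≤ f t)
    (hfne : ¬ f =ᵐ[volume.restrict (Set.Ici 0)] 0)
    (hw : ContinuousOn w (Set.Ici 0)) (hw' : DifferentiableAt ℝ w 0)
    (hAC : ∀ T > (0 : ℝ), AC2On (capKernel α w) T)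
    (heq : ∀ᵐ t ∂volume.restrict (Set.Ici 0), caputoD α w t + a * w t = rlInt γ f t)
    (hγα : α / 2 ≤ γ) (hαγ : 2 < α + γ) :
    0 < liminf (fun t : ℝ => ((t ^ (1 - γ) * w t : ℝ) : EReal)) atTop := by
  rw [← Measure.restrict_congr_set Ioi_ae_eq_Ici] at hf0 hfne heq
  have hfloc := locallyIntegrableOn_Ici_iff.2 hf
  have hwloc := hw.locallyIntegrableOn (μ := volume) measurableSet_Ici
  have hqloc : LocallyIntegrableOn (caputoD α w) (Set.Ici 0) :=
    locallyIntegrableOn_Ici_iff.2 fun T hT => (hAC T hT).2.1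
  have hqw := capKernel_ae_eq_causalConv_caputoD hα2 hw' hAC
  rw [capKernel_eq_causalConv hα2] at hqw
  have hqf : caputoD α w + a • w =ᵐ[volume.restrict (Set.Ioi 0)] causalConv (rlKernel γ) f :=
    heq.mono fun t ht => ht.trans (rlInt_eq_causalConv γ f t)
  have hsol := ae_eq_mlKernel_add_causalConv (by linarith) (by linarith) hfloc hwloc
    (ae_add_smul_causalConv_eq_rlKernel_add hα1 hα2 (by linarith) hfloc hwloc hqloc hqw hqf)
  obtain ⟨c, hc, T, hT, hcT⟩ := exists_ae_le_rpow_mul hα1 hα2 ha hγα hαγ hfloc hf0 hfne hsol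
  refine liminf_coe_ereal_pos_of_ae_le hc (ContinuousOn.mul ?_ ?_) hcT
  · exact continuousOn_id.rpow_const fun t ht => Or.inl (hT.trans ht).ne'
  · exact hw.mono fun t ht => (hT.trans ht).le

lemma not_ae_eq_zero_of_mul_rpow_le {p b : ℝ} {f w : ℝ → ℝ} (hb : 0 < b)
    (hw : ContinuousOn w (Set.Ici 0)) (hw0 : ∃ t : ℝ, 0 ≤ t ∧ w t ≠ 0)
    (hfw : ∀ᵐ t ∂volume.restrict (Set.Ici 0), b * |w t| ^ p ≤ f t) :
    ¬ f =ᵐ[volume.restrict (Set.Ici 0)] 0 := by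
  obtain ⟨t₀, ht₀, hwt₀⟩ := hw0
  intro hf
  have hwae : w =ᵐ[volume.restrict (Set.Ici 0)] 0 := by
    filter_upwards [hf, hfw] with t hft hfwt
    by_contra hwt
    exact (mul_pos hb (Real.rpow_pos_of_pos (abs_pos.2 hwt) p)).not_ge (hfwt.trans_eq hft)
  refine hwt₀ (Measure.eqOn_of_ae_eq hwae hw continuousOn_const ?_ ht₀)
  rw [interior_Ici, closure_Ioi]

/-- Lemma 2.3 (iii): if γ ≥ α/2 and α + γ > 2, then liminf t^{1−γ} w(t) > 0. -/
theorem liminf_pos_iii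
    (γ α p a b : ℝ) (f w : ℝ → ℝ)
    (hγ : 0 < γ) (hα1 : 1 < α) (hα2 : α < 2) (hp : 1 < p) (ha : 0 < a) (hb : 0 < b)
    (hf : ∀ T > (0:ℝ), IntervalIntegrable f volume 0 T)
    (hw : ContDiff ℝ 1 w)
    (hw0 : ∃ t : ℝ, 0 ≤ t ∧ w t ≠ 0)
    (hAC : ∀ T > (0:ℝ), AC2On (capKernel α w) T)
    (heq : ∀ᵐ t ∂(volume.restrict (Set.Ici (0:ℝ))),
      caputoD α w t + a * w t = rlInt γ f t ∧ f t ≥ b * |w t| ^ p)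
    (hγα : α / 2 ≤ γ) (hαγ : 2 < α + γ) :
    0 < liminf (fun t : ℝ => ((t ^ (1 - γ) * w t : ℝ) : EReal)) atTop := by
  have hfw : ∀ᵐ t ∂volume.restrict (Set.Ici 0), b * |w t| ^ p ≤ f t := heq.mono fun t h => h.2
  exact liminf_pos_iii_general hα1 hα2 ha hf
    (hfw.mono fun t h => (by positivity : 0 ≤ b * |w t| ^ p).trans h)
    (not_ae_eq_zero_of_mul_rpow_le hb hw.continuous.continuousOn hw0 hfw)
    hw.continuous.continuousOn (hw.differentiable one_ne_zero 0) hAC (heq.mono fun t h => h.1)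
    hγα hαγ
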